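/- Let (x_i)_{i∈ℕ} be a normalized block sequence of (e_i) and let (k_i) be a strictly increasing sequence in ℕ. Then there exists a subsequence (y_i) of (x_i) with the following property: whenever (s_i) and (t_i) are strictly increasing sequences in ℕ with s_i ≤ k_i and t_i ≤ k_i for all i ∈ ℕ, the sequences (y_{s_i}) and (y_{t_i}) are equivalent. -/

import Mathlib

abbrev c00 : Type := ℕ →₀ ℝ

noncomputable def flog (x : ℝ) : ℝ := Real.logb 2 (x + 1)

noncomputable def supNorm (x : c00) : ℝ := ⨆ i, |x i|

def proj (E : Finset ℕ) (x : c00) : c00 := x.filter (· ∈ E)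

def FLt (A B : Finset ℕ) : Prop := ∀ a ∈ A, ∀ b ∈ B, a < b

def IsNormC00 (N : c00 → ℝ) : Prop :=
  (∀ x, N x = 0 ↔ x = 0) ∧ (∀ x y, N (x + y) ≤ N x + N y) ∧
    ∀ (a : ℝ) (x : c00), N (a • x) = |a| * N x

def schSet (N : c00 → ℝ) (x : c00) : Set ℝ :=
  {s | ∃ n : ℕ, 2 ≤ n ∧ ∃ E : Fin n → Finset ℕ,
    (∀ i j : Fin n, i < j → FLt (E i) (E j)) ∧
    s = (flog n)⁻¹ * ∑ i, N (proj (E i) x)}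

def IsSchlumprechtNorm (N : c00 → ℝ) : Prop :=
  IsNormC00 N ∧ ∀ x : c00, IsLUB (insert (supNorm x) (schSet N x)) (N x)

def IsBlockSeq (x : ℕ → c00) : Prop :=
  (∀ n, x n ≠ 0) ∧ ∀ n, ∀ i ∈ (x n).support, ∀ j ∈ (x (n+1)).support, i < j

def SeqEquiv (N : c00 → ℝ) (u v : ℕ → c00) : Prop :=
  ∃ c : ℝ, 1 ≤ c ∧ ∀ a : ℕ →₀ ℝ,
    (1 / c) * N (a.sum fun i t => t • u i) ≤ N (a.sum fun i t => t • v i) ∧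
    N (a.sum fun i t => t • v i) ≤ c * N (a.sum fun i t => t • u i)


namespace Sch

/-! ### The function `flog` -/

lemma flog_zero : flog 0 = 0 := by simp [flog]

lemma flog_one : flog 1 = 1 := by
  unfold flog; norm_num

lemma flog_mono {a b : ℝ} (ha : 0 ≤ a) (h : a ≤ b) : flog a ≤ flog b := by
  unfold flog
  exact Real.logb_le_logb_of_le (by norm_num) (by linarith) (by linarith)

lemma flog_nonneg {a : ℝ} (ha : 0 ≤ a) : 0 ≤ flog a := by
  rw [← flog_zero]; exact flog_mono le_rfl ha

lemma flog_nat_nonneg (n : ℕ) : 0 ≤ flog (n : ℝ) := flog_nonneg (by positivity)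

lemma flog_nat_mono {m n : ℕ} (h : m ≤ n) : flog (m : ℝ) ≤ flog (n : ℝ) :=
  flog_mono (by positivity) (by exact_mod_cast h)

lemma flog_one_le {n : ℕ} (h : 1 ≤ n) : 1 ≤ flog (n : ℝ) := by
  rw [← flog_one]; exact flog_mono (by norm_num) (by exact_mod_cast h)

lemma flog_two : (3 / 2 : ℝ) ≤ flog 2 := by
  unfold flog
  rw [Real.le_logb_iff_rpow_le (by norm_num) (by norm_num)]
  have h : ((2 : ℝ) ^ (3 / 2 : ℝ)) ^ 2 ≤ (2 + 1) ^ 2 := by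
    rw [← Real.rpow_natCast, ← Real.rpow_mul (by norm_num)]
    norm_num
  exact le_of_sq_le_sq h (by norm_num)

lemma flog_two_le {n : ℕ} (h : 2 ≤ n) : (3 / 2 : ℝ) ≤ flog (n : ℝ) :=
  flog_two.trans (flog_mono (by norm_num) (by exact_mod_cast h))

lemma rpow_flog {a : ℝ} (ha : 0 ≤ a) : (2 : ℝ) ^ (flog a) = a + 1 := by
  unfold flog
  exact Real.rpow_logb (by norm_num) (by norm_num) (by linarith)

lemma flog_le_iff {a t : ℝ} (ha : 0 ≤ a) : flog a ≤ t ↔ a + 1 ≤ 2 ^ t := by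
  unfold flog
  exact Real.logb_le_iff_le_rpow (by norm_num) (by linarith)

lemma flog_mul_le {a b : ℝ} (ha : 0 ≤ a) (hb : 0 ≤ b) : flog (a * b) ≤ flog a + flog b := by
  rw [flog_le_iff (by positivity), Real.rpow_add (by norm_num), rpow_flog ha, rpow_flog hb]
  nlinarith

/-! ### Projections -/

lemma proj_apply (E : Finset ℕ) (x : c00) (i : ℕ) : proj E x i = if i ∈ E then x i else 0 := by
  unfold proj; rw [Finsupp.filter_apply]

lemma proj_add (E : Finset ℕ) (x y : c00) : proj E (x + y) = proj E x + proj E y := by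
  ext i; simp only [proj_apply, Finsupp.add_apply]; split_ifs <;> simp

lemma proj_smul (E : Finset ℕ) (a : ℝ) (x : c00) : proj E (a • x) = a • proj E x := by
  ext i; simp only [proj_apply, Finsupp.smul_apply]; split_ifs <;> simp

lemma proj_zero (E : Finset ℕ) : proj E 0 = 0 := by
  ext i; simp [proj_apply]

lemma proj_empty (x : c00) : proj ∅ x = 0 := by
  ext i; simp [proj_apply]

lemma proj_proj (E F : Finset ℕ) (x : c00) : proj E (proj F x) = proj (E ∩ F) x := by
  ext i; simp only [proj_apply, Finset.mem_inter]; split_ifs <;> simp_all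

lemma proj_proj_sub {E F : Finset ℕ} (h : E ⊆ F) (x : c00) : proj E (proj F x) = proj E x := by
  rw [proj_proj, Finset.inter_eq_left.2 h]

lemma proj_support (E : Finset ℕ) (x : c00) : (proj E x).support = x.support ∩ E := by
  ext i; simp only [Finsupp.mem_support_iff, proj_apply, Finset.mem_inter]; split_ifs <;> simp_all

lemma proj_eq_self {E : Finset ℕ} {x : c00} (h : x.support ⊆ E) : proj E x = x := by
  ext i; rw [proj_apply]; split_ifs with hi
  · rfl
  · have : i ∉ x.support := fun h' => hi (h h')
    simpa using (Finsupp.notMem_support_iff.1 this).symm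

lemma proj_inter_support (E : Finset ℕ) (x : c00) : proj (E ∩ x.support) x = proj E x := by
  rw [← proj_proj, proj_eq_self (le_refl _)]

lemma proj_eq_zero {E : Finset ℕ} {x : c00} (h : ∀ i ∈ x.support, i ∉ E) : proj E x = 0 := by
  ext i; rw [proj_apply]; split_ifs with hi
  · by_contra hne
    exact h i (by simpa using hne) hi
  · rfl

/-- Pairwise separated (unordered) families of finite sets. -/
def Sep {ι : Type*} (s : Finset ι) (E : ι → Finset ℕ) : Prop :=
  ∀ i ∈ s, ∀ j ∈ s, i ≠ j → FLt (E i) (E j) ∨ FLt (E j) (E i)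

lemma FLt.mono {A B A' B' : Finset ℕ} (h : FLt A B) (hA : A' ⊆ A) (hB : B' ⊆ B) : FLt A' B' :=
  fun a ha b hb => h a (hA ha) b (hB hb)

lemma FLt.disj {A B : Finset ℕ} (h : FLt A B ∨ FLt B A) : Disjoint A B := by
  rw [Finset.disjoint_left]
  intro a ha hb
  rcases h with h | h
  · exact lt_irrefl _ (h a ha a hb)
  · exact lt_irrefl _ (h a hb a ha)

/-! ### Basic properties of the norm -/

section basics



lemma N_zero {N : c00 → ℝ} (hN : IsSchlumprechtNorm N) : N 0 = 0 := (hN.1.1 0).2 rfl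

lemma N_add {N : c00 → ℝ} (hN : IsSchlumprechtNorm N) (x y : c00) : N (x + y) ≤ N x + N y := hN.1.2.1 x y

lemma N_smul {N : c00 → ℝ} (hN : IsSchlumprechtNorm N) (a : ℝ) (x : c00) : N (a • x) = |a| * N x := hN.1.2.2 a x

lemma N_neg {N : c00 → ℝ} (hN : IsSchlumprechtNorm N) (x : c00) : N (-x) = N x := by
  have := N_smul hN (-1) x
  simpa using this

lemma N_nonneg {N : c00 → ℝ} (hN : IsSchlumprechtNorm N) (x : c00) : 0 ≤ N x := by
  have h := N_add hN x (-x)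
  rw [N_neg hN, add_neg_cancel, N_zero hN] at h
  linarith

lemma N_pos {N : c00 → ℝ} (hN : IsSchlumprechtNorm N) {x : c00} (hx : x ≠ 0) : 0 < N x :=
  lt_of_le_of_ne (N_nonneg hN x) (fun h => hx ((hN.1.1 x).1 h.symm))

lemma N_sum_le {N : c00 → ℝ} (hN : IsSchlumprechtNorm N) {ι : Type*} (s : Finset ι) (g : ι → c00) : N (∑ i ∈ s, g i) ≤ ∑ i ∈ s, N (g i) := by
  classical
  induction s using Finset.induction_on with
  | empty => simp [N_zero hN]
  | insert a s ha ih =>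
    rw [Finset.sum_insert ha, Finset.sum_insert ha]
    exact (N_add hN _ _).trans (by linarith)

lemma abs_le_supNorm (x : c00) (i : ℕ) : |x i| ≤ supNorm x := by
  unfold supNorm
  have hfin : (Set.range fun i => |x i|).Finite := by
    refine ((x.support.finite_toSet.image (fun i => |x i|)).union (Set.finite_singleton 0)).subset ?_
    rintro _ ⟨j, rfl⟩
    by_cases hj : j ∈ x.support
    · left; exact ⟨j, hj, rfl⟩
    · right; simpa using hj
  exact le_ciSup hfin.bddAbove i

lemma supNorm_le {x : c00} {B : ℝ} (h : ∀ i, |x i| ≤ B) : supNorm x ≤ B := ciSup_le h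

lemma supNorm_attained (x : c00) : ∃ i, supNorm x = |x i| := by
  by_cases hx : x.support.Nonempty
  · obtain ⟨i, hi, hmax⟩ := Finset.exists_max_image x.support (fun i => |x i|) hx
    refine ⟨i, le_antisymm (supNorm_le fun j => ?_) (abs_le_supNorm x i)⟩
    by_cases hj : j ∈ x.support
    · exact hmax j hj
    · rw [Finsupp.notMem_support_iff.1 hj]; simp
  · refine ⟨0, le_antisymm (supNorm_le fun j => ?_) (abs_le_supNorm x 0)⟩
    rw [Finset.not_nonempty_iff_eq_empty, Finsupp.support_eq_empty] at hx
    simp [hx]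

lemma supNorm_le_N {N : c00 → ℝ} (hN : IsSchlumprechtNorm N) (x : c00) : supNorm x ≤ N x := (hN.2 x).1 (Set.mem_insert _ _)

lemma abs_le_N {N : c00 → ℝ} (hN : IsSchlumprechtNorm N) (x : c00) (i : ℕ) : |x i| ≤ N x := (abs_le_supNorm x i).trans (supNorm_le_N hN x)

lemma N_fin_le {N : c00 → ℝ} (hN : IsSchlumprechtNorm N) (x : c00) {n : ℕ} (hn : 2 ≤ n) (E : Fin n → Finset ℕ)
    (hE : ∀ i j : Fin n, i < j → FLt (E i) (E j)) :
    ∑ i, N (proj (E i) x) ≤ flog n * N x := by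
  have h := (hN.2 x).1 (Set.mem_insert_of_mem _ ⟨n, hn, E, hE, rfl⟩)
  have hp : 0 < flog (n : ℝ) := by linarith [flog_two_le hn]
  rwa [inv_mul_le_iff₀ hp] at h

lemma N_le_of {N : c00 → ℝ} (hN : IsSchlumprechtNorm N) {x : c00} {B : ℝ} (h0 : ∀ i, |x i| ≤ B)
    (h : ∀ n : ℕ, 2 ≤ n → ∀ E : Fin n → Finset ℕ, (∀ i j : Fin n, i < j → FLt (E i) (E j)) →
      (flog n)⁻¹ * ∑ i, N (proj (E i) x) ≤ B) : N x ≤ B := by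
  refine (hN.2 x).2 ?_
  rintro _ (rfl | ⟨n, hn, E, hE, rfl⟩)
  · exact supNorm_le h0
  · exact h n hn E hE

lemma N_proj_le {N : c00 → ℝ} (hN : IsSchlumprechtNorm N) (E : Finset ℕ) (x : c00) : N (proj E x) ≤ N x := by
  induction hc : x.support.card using Nat.strong_induction_on generalizing x with
  | _ c ih =>
  subst hc
  have key : N (proj E x) ≤ max (N x) (N (proj E x) * (2 / 3)) := by
    refine N_le_of hN (fun i => ?_) (fun n hn G hG => ?_)
    · refine le_max_of_le_left ?_
      rw [proj_apply]; split_ifs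
      · exact abs_le_N hN x i
      · simpa using N_nonneg hN x
    · have hf := flog_two_le hn
      by_cases hall : ∃ i, x.support ⊆ G i
      · obtain ⟨i, hi⟩ := hall
        refine le_max_of_le_right ?_
        have : ∑ j, N (proj (G j) (proj E x)) = N (proj E x) := by
          rw [Finset.sum_eq_single i]
          · rw [proj_eq_self]
            rw [proj_support]; exact (Finset.inter_subset_left).trans hi
          · intro j _ hj
            have hd : Disjoint (G j) (G i) := by
              apply FLt.disj
              rcases lt_or_gt_of_ne hj with h | h
              · left; exact hG _ _ h
              · right; exact hG _ _ h
            rw [proj_eq_zero, N_zero hN]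
            intro a ha haj
            rw [proj_support, Finset.mem_inter] at ha
            exact Finset.disjoint_left.1 hd haj (hi ha.1)
          · simp
        rw [this, inv_mul_le_iff₀ (by linarith)]
        nlinarith [N_nonneg hN (proj E x)]
      · push Not at hall
        refine le_max_of_le_left ?_
        rw [inv_mul_le_iff₀ (by linarith)]
        refine le_trans (Finset.sum_le_sum fun j _ => ?_) (N_fin_le hN x hn G hG)
        rw [proj_proj, Finset.inter_comm, ← proj_proj]
        refine ih _ ?_ _ rfl
        rw [proj_support]
        refine Finset.card_lt_card ⟨Finset.inter_subset_left, fun h => hall j ?_⟩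
        exact h.trans Finset.inter_subset_right
  rcases le_max_iff.1 key with h | h
  · exact h
  · have := N_nonneg hN (proj E x)
    have := N_nonneg hN x
    linarith

lemma N_proj_mono {N : c00 → ℝ} (hN : IsSchlumprechtNorm N) {E F : Finset ℕ} (h : E ⊆ F) (x : c00) : N (proj E x) ≤ N (proj F x) := by
  rw [← proj_proj_sub h]; exact N_proj_le hN _ _

/-- The basic inequality for unordered separated families. -/
lemma sep_sum_le {N : c00 → ℝ} (hN : IsSchlumprechtNorm N) {ι : Type*} (s : Finset ι) (E : ι → Finset ℕ) (h : Sep s E) (x : c00) :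
    ∑ i ∈ s, N (proj (E i) x) ≤ flog (s.card : ℝ) * N x := by
  classical
  set s' := s.filter (fun i => (E i).Nonempty) with hs'
  have hsum : ∑ i ∈ s, N (proj (E i) x) = ∑ i ∈ s', N (proj (E i) x) := by
    rw [hs', Finset.sum_filter]
    refine Finset.sum_congr rfl fun i _ => ?_
    split_ifs with hi
    · rfl
    · rw [Finset.not_nonempty_iff_eq_empty.1 hi, proj_empty, N_zero hN]
  have hcard : s'.card ≤ s.card := Finset.card_filter_le _ _
  rw [hsum]
  refine le_trans ?_ (mul_le_mul_of_nonneg_right (flog_nat_mono hcard) (N_nonneg hN x))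
  rcases Nat.lt_or_ge s'.card 2 with hlt | hge
  · interval_cases hc : s'.card
    · rw [Finset.card_eq_zero] at hc
      rw [hc]; simp [flog_zero]
    · obtain ⟨i, hi⟩ := Finset.card_eq_one.1 hc
      rw [hi]; simp only [Finset.sum_singleton, Nat.cast_one, flog_one, one_mul]
      exact N_proj_le hN _ _
  · set key : ι → ℕ := fun i => (E i).sup id with hkey
    have hkl : ∀ i ∈ s', ∀ j ∈ s', FLt (E i) (E j) → key i < key j := by
      intro i hi j hj hij
      have hi' := (Finset.mem_filter.1 hi).2
      have hj' := (Finset.mem_filter.1 hj).2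
      obtain ⟨a, ha, hae⟩ := Finset.exists_mem_eq_sup (E i) hi' id
      obtain ⟨b, hb⟩ := hj'
      calc key i = a := hae
        _ < b := hij a ha b hb
        _ ≤ key j := Finset.le_sup (f := id) hb
    have hsep : Sep s' E := fun i hi j hj hij =>
      h i (Finset.mem_filter.1 hi).1 j (Finset.mem_filter.1 hj).1 hij
    have hinj : Set.InjOn key s' := by
      intro i hi j hj hij
      by_contra hne
      rcases hsep i hi j hj hne with h1 | h1
      · exact absurd (hkl i hi j hj h1) (by omega)
      · exact absurd (hkl j hj i hi h1) (by omega)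
    have hne : Nonempty ι := by
      have : s'.Nonempty := Finset.card_pos.1 (by omega)
      exact ⟨this.choose⟩
    set inv := Function.invFunOn key (s' : Set ι) with hinv
    have hli : ∀ i ∈ s', inv (key i) = i := fun i hi => hinj.leftInvOn_invFunOn hi
    set T := s'.image key with hT
    have hTc : T.card = s'.card := Finset.card_image_of_injOn hinj
    set e := T.orderEmbOfFin hTc with he
    have hmem : ∀ q, e q ∈ T := fun q => Finset.orderEmbOfFin_mem T hTc q
    have hinvmem : ∀ q, inv (e q) ∈ s' ∧ key (inv (e q)) = e q := by
      intro q
      obtain ⟨i, hi, hie⟩ := Finset.mem_image.1 (hmem q)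
      rw [← hie, hli i hi]; exact ⟨hi, rfl⟩
    have hs : ∑ i ∈ s', N (proj (E i) x) = ∑ q, N (proj (E (inv (e q))) x) := by
      calc ∑ i ∈ s', N (proj (E i) x) = ∑ i ∈ s', N (proj (E (inv (key i))) x) :=
            Finset.sum_congr rfl fun i hi => by rw [hli i hi]
        _ = ∑ t ∈ T, N (proj (E (inv t)) x) := by
            rw [hT, Finset.sum_image hinj]
        _ = _ := by
            rw [← Finset.map_orderEmbOfFin_univ T hTc, Finset.sum_map]
            rfl
    rw [hs]
    refine N_fin_le hN x hge _ ?_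
    intro q r hqr
    have hlt : e q < e r := e.strictMono hqr
    have hq := hinvmem q
    have hr := hinvmem r
    have hne' : inv (e q) ≠ inv (e r) := by
      intro hh; rw [← hq.2, ← hr.2, hh] at hlt; exact lt_irrefl _ hlt
    rcases hsep _ hq.1 _ hr.1 hne' with h1 | h1
    · exact h1
    · have := hkl _ hr.1 _ hq.1 h1
      omega

/-- A vector is of leaf type if its norm is the sup norm. -/
def Leaf (N : c00 → ℝ) (x : c00) : Prop := ∃ i, N x = |x i|

/-- `x` has an optimal decomposition given by the family `P`. -/
def OptP (N : c00 → ℝ) (x : c00) (P : Finset (Finset ℕ)) : Prop :=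
  2 ≤ P.card ∧ Sep P id ∧ (∀ E ∈ P, E.Nonempty ∧ E ⊆ x.support) ∧
    flog (P.card : ℝ) * N x ≤ ∑ E ∈ P, N (proj E x)

lemma attain {N : c00 → ℝ} (hN : IsSchlumprechtNorm N) {x : c00} (hx : x ≠ 0) : Leaf N x ∨ ∃ P, OptP N x P := by
  classical
  by_contra hcon
  push Not at hcon
  obtain ⟨hL, hP⟩ := hcon
  have hpos := N_pos hN hx
  have hsup : supNorm x < N x := by
    refine lt_of_le_of_ne (supNorm_le_N hN x) fun h => hL ?_
    obtain ⟨i, hi⟩ := supNorm_attained x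
    exact ⟨i, by rw [← h, hi]⟩
  set val : Finset (Finset ℕ) → ℝ := fun P => (flog (P.card : ℝ))⁻¹ * ∑ E ∈ P, N (proj E x)
  set C : Finset (Finset (Finset ℕ)) := (x.support.powerset.powerset).filter
    (fun P => 2 ≤ P.card ∧ Sep P id ∧ ∀ E ∈ P, E.Nonempty) with hC
  have hval : ∀ P ∈ C, val P < N x := by
    intro P hPC
    obtain ⟨h1, h2, h3, h4⟩ := Finset.mem_filter.1 hPC
    have hsub : ∀ E ∈ P, E ⊆ x.support := fun E hE =>
      Finset.mem_powerset.1 (Finset.mem_powerset.1 h1 hE)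
    by_contra hge
    push Not at hge
    refine hP P ⟨h2, h3, fun E hE => ⟨h4 E hE, hsub E hE⟩, ?_⟩
    have hf : 0 < flog (P.card : ℝ) := by linarith [flog_two_le h2]
    rwa [le_inv_mul_iff₀ hf] at hge
  obtain ⟨B, hB1, hB2⟩ : ∃ B < N x, ∀ P ∈ C, val P ≤ B := by
    by_cases hne : C.Nonempty
    · obtain ⟨P0, hP0, hmax⟩ := Finset.exists_max_image C val hne
      exact ⟨val P0, hval _ hP0, hmax⟩
    · rw [Finset.not_nonempty_iff_eq_empty] at hne
      exact ⟨0, hpos, by simp [hne]⟩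
  have hfin : N x ≤ max (max (supNorm x) B) (N x * (2 / 3)) := by
    refine N_le_of hN (fun i => le_max_of_le_left (le_max_of_le_left (abs_le_supNorm x i)))
      (fun n hn E hE => ?_)
    have hf := flog_two_le hn
    set P := (Finset.univ.image (fun i => E i ∩ x.support)).filter (fun F => F.Nonempty) with hPdef
    have hdis : ∀ i j, (E i ∩ x.support).Nonempty → E i ∩ x.support = E j ∩ x.support → i = j := by
      intro i j hi hij
      by_contra hne
      have hd : Disjoint (E i) (E j) := by
        apply FLt.disj
        rcases lt_or_gt_of_ne hne with h | h
        · left; exact hE _ _ h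
        · right; exact hE _ _ h
      obtain ⟨a, ha⟩ := hi
      have ha' := ha
      rw [hij] at ha'
      exact Finset.disjoint_left.1 hd (Finset.mem_inter.1 ha).1 (Finset.mem_inter.1 ha').1
    have hsum : ∑ i, N (proj (E i) x) = ∑ F ∈ P, N (proj F x) := by
      have h1 : ∑ i, N (proj (E i) x) =
          ∑ i ∈ Finset.univ.filter (fun i => (E i ∩ x.support).Nonempty),
            N (proj (E i ∩ x.support) x) := by
        rw [Finset.sum_filter]
        refine Finset.sum_congr rfl fun i _ => ?_
        split_ifs with hi
        · rw [proj_inter_support]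
        · rw [← proj_inter_support, Finset.not_nonempty_iff_eq_empty.1 hi, proj_empty, N_zero hN]
      rw [h1, hPdef, Finset.filter_image, Finset.sum_image]
      intro i hi j hj hij
      exact hdis i j (Finset.mem_filter.1 hi).2 hij
    have hPn : P.card ≤ n := by
      refine (Finset.card_filter_le _ _).trans (Finset.card_image_le.trans ?_)
      simp
    have hPsep : Sep P id := by
      intro F hF G hG hFG
      obtain ⟨hF1, hF2⟩ := Finset.mem_filter.1 hF
      obtain ⟨hG1, hG2⟩ := Finset.mem_filter.1 hG
      obtain ⟨i, _, rfl⟩ := Finset.mem_image.1 hF1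
      obtain ⟨j, _, rfl⟩ := Finset.mem_image.1 hG1
      have hij : i ≠ j := fun h => hFG (by rw [h])
      rcases lt_or_gt_of_ne hij with h | h
      · left; exact FLt.mono (hE _ _ h) Finset.inter_subset_left Finset.inter_subset_left
      · right; exact FLt.mono (hE _ _ h) Finset.inter_subset_left Finset.inter_subset_left
    rw [hsum]
    rcases Nat.lt_or_ge P.card 2 with hlt | hge
    · refine le_max_of_le_right ?_
      have h2 := sep_sum_le hN P id hPsep x
      have h3 : flog (P.card : ℝ) ≤ 1 := by
        rw [← flog_one]; exact flog_mono (by positivity) (by exact_mod_cast (by omega))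
      simp only [id] at h2
      rw [inv_mul_le_iff₀ (by linarith)]
      nlinarith
    · refine le_max_of_le_left (le_max_of_le_right ?_)
      have hPC : P ∈ C := by
        refine Finset.mem_filter.2 ⟨?_, hge, hPsep, fun F hF => (Finset.mem_filter.1 hF).2⟩
        rw [Finset.mem_powerset]
        intro F hF
        obtain ⟨i, _, rfl⟩ := Finset.mem_image.1 (Finset.mem_filter.1 hF).1
        exact Finset.mem_powerset.2 Finset.inter_subset_right
      refine le_trans ?_ (hB2 P hPC)
      refine mul_le_mul_of_nonneg_right ?_ (Finset.sum_nonneg fun F _ => N_nonneg hN _)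
      exact inv_anti₀ (by linarith [flog_two_le hge]) (flog_nat_mono hPn)
  rcases le_max_iff.1 hfin with h | h
  · rcases le_max_iff.1 h with h | h <;> linarith
  · linarith

end basics

end Sch

namespace Sch

/-! ### The norming functionals with slack -/

/-- Norming functionals whose node weights are `flog (4 n)`. -/
inductive W : Finset ℕ → (c00 →ₗ[ℝ] ℝ) → Prop
  | pos (i : ℕ) : W {i} (Finsupp.lapply i)
  | neg (i : ℕ) : W {i} (-Finsupp.lapply i)
  | node (s : Finset (Finset ℕ)) (E : Finset ℕ → Finset ℕ) (φ : Finset ℕ → (c00 →ₗ[ℝ] ℝ))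
      (hs : s.Nonempty) (hE : Sep s E) (h : ∀ p ∈ s, W (E p) (φ p)) :
      W (s.biUnion E) ((flog (4 * s.card : ℝ))⁻¹ • ∑ p ∈ s, φ p)

lemma flog_four_pos {n : ℕ} (hn : 1 ≤ n) : 1 ≤ flog (4 * n : ℝ) := by
  have := flog_one_le (n := 4 * n) (by omega)
  push_cast at this; exact this

lemma flog_le_four (n : ℕ) : flog (n : ℝ) ≤ flog (4 * n : ℝ) :=
  flog_mono (by positivity) (by linarith [(Nat.cast_nonneg n : (0 : ℝ) ≤ n)])

lemma W_le {N : c00 → ℝ} (hN : IsSchlumprechtNorm N) {E : Finset ℕ} {φ : c00 →ₗ[ℝ] ℝ}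
    (h : W E φ) (x : c00) : φ x ≤ N (proj E x) := by
  induction h with
  | pos i =>
    have := abs_le_N hN (proj {i} x) i
    simp only [proj_apply, Finset.mem_singleton, if_true] at this
    simpa using (le_abs_self _).trans this
  | neg i =>
    have := abs_le_N hN (proj {i} x) i
    simp only [proj_apply, Finset.mem_singleton, if_true] at this
    simpa using (neg_le_abs _).trans this
  | node s E φ hs hE h ih =>
    have h1 : ∑ p ∈ s, φ p x ≤ flog (s.card : ℝ) * N (proj (s.biUnion E) x) := by
      refine le_trans (Finset.sum_le_sum fun p hp => ih p hp) ?_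
      refine le_trans (le_of_eq (Finset.sum_congr rfl fun p hp => ?_))
        (sep_sum_le hN s E hE (proj (s.biUnion E) x))
      rw [proj_proj_sub (Finset.subset_biUnion_of_mem E hp)]
    have h2 := flog_four_pos (Finset.card_pos.2 hs)
    simp only [LinearMap.smul_apply, LinearMap.sum_apply, smul_eq_mul]
    rw [inv_mul_le_iff₀ (by linarith)]
    refine h1.trans (mul_le_mul_of_nonneg_right (flog_le_four _) (N_nonneg hN _))

lemma W_abs_le {N : c00 → ℝ} (hN : IsSchlumprechtNorm N) {E : Finset ℕ} {φ : c00 →ₗ[ℝ] ℝ}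
    (h : W E φ) (x : c00) : |φ x| ≤ N (proj E x) := by
  rw [abs_le]
  refine ⟨?_, W_le hN h x⟩
  have := W_le hN h ((-1 : ℝ) • x)
  rw [proj_smul, N_smul hN, map_smul] at this
  simp at this
  linarith

lemma W_local {N : c00 → ℝ} (hN : IsSchlumprechtNorm N) {E F : Finset ℕ} {φ : c00 →ₗ[ℝ] ℝ}
    (h : W E φ) (hEF : E ⊆ F) (x : c00) : φ (proj F x) = φ x := by
  have h1 := W_abs_le hN h (proj F x - x)
  have h2 : proj E (proj F x - x) = 0 := by
    ext i
    rw [proj_apply]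
    split_ifs with hi
    · simp [proj_apply, hEF hi]
    · rfl
  rw [h2, N_zero hN] at h1
  have := abs_nonpos_iff.1 h1
  rw [map_sub] at this
  linarith

lemma sep_sigma {P : Finset (Finset ℕ)} (hP : Sep P id) (Q : Finset ℕ → Finset (Finset ℕ))
    (hQ : ∀ E ∈ P, Sep (Q E) id) (hsub : ∀ E ∈ P, ∀ F ∈ Q E, F ⊆ E) :
    Sep (P.sigma fun E => Q E) (fun p : (Σ _ : Finset ℕ, Finset ℕ) => p.2) := by
  rintro ⟨E, F⟩ h ⟨E', F'⟩ h' hne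
  simp only [Finset.mem_sigma] at h h'
  by_cases hE : E = E'
  · subst hE
    have : F ≠ F' := fun e => hne (by rw [e])
    exact hQ E h.1 F h.2 F' h'.2 this
  · rcases hP E h.1 E' h'.1 hE with h1 | h1
    · exact Or.inl (FLt.mono h1 (hsub E h.1 F h.2) (hsub E' h'.1 F' h'.2))
    · exact Or.inr (FLt.mono h1 (hsub E' h'.1 F' h'.2) (hsub E h.1 F h.2))

lemma OptP_sub {N : c00 → ℝ} {x : c00} {E : Finset ℕ} {Q : Finset (Finset ℕ)}
    (h : OptP N (proj E x) Q) {F : Finset ℕ} (hF : F ∈ Q) : F ⊆ E := by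
  have := (h.2.2.1 F hF).2
  rw [proj_support] at this
  exact this.trans Finset.inter_subset_right

lemma merge {N : c00 → ℝ} (hN : IsSchlumprechtNorm N) {x : c00} {P : Finset (Finset ℕ)}
    (hP : OptP N x P) {I : Finset (Finset ℕ)} (hI : I ⊆ P) (Q : Finset ℕ → Finset (Finset ℕ))
    {T : ℝ} (hT : 0 ≤ T) (hQ : ∀ E ∈ I, OptP N (proj E x) (Q E))
    (hQT : ∀ E ∈ I, flog ((Q E).card : ℝ) ≤ T) :
    ∑ E ∈ I, (flog ((Q E).card : ℝ) - 1) * N (proj E x) ≤ T * N x := by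
  classical
  set Q' : Finset ℕ → Finset (Finset ℕ) := fun E => if E ∈ I then Q E else {E} with hQ'
  have hsub : ∀ E ∈ P, ∀ F ∈ Q' E, F ⊆ E := by
    intro E _ F hF
    simp only [hQ'] at hF
    split_ifs at hF with h
    · exact OptP_sub (hQ E h) hF
    · rw [Finset.mem_singleton.1 hF]
  have hsep : Sep (P.sigma fun E => Q' E) (fun p : (Σ _ : Finset ℕ, Finset ℕ) => p.2) := by
    refine sep_sigma hP.2.1 Q' ?_ hsub
    intro E _
    simp only [hQ']
    split_ifs with h
    · exact (hQ E h).2.1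
    · intro i hi j hj hne
      rw [Finset.mem_singleton] at hi hj
      exact absurd (hi.trans hj.symm) hne
  have h1 := sep_sum_le hN _ _ hsep x
  rw [Finset.sum_sigma] at h1
  have h2 : ∑ E ∈ P, N (proj E x) + ∑ E ∈ I, (flog ((Q E).card : ℝ) - 1) * N (proj E x)
      ≤ ∑ E ∈ P, ∑ F ∈ Q' E, N (proj F x) := by
    rw [← Finset.inter_eq_right.2 hI, ← Finset.sum_ite_mem, ← Finset.sum_add_distrib]
    refine Finset.sum_le_sum fun E hE => ?_
    simp only [hQ']
    split_ifs with h
    · have := (hQ E h).2.2.2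
      have h3 : ∑ F ∈ Q E, N (proj F (proj E x)) = ∑ F ∈ Q E, N (proj F x) :=
        Finset.sum_congr rfl fun F hF => by rw [proj_proj_sub (OptP_sub (hQ E h) hF)]
      rw [h3] at this
      linarith
    · simp
  have hcard : ((P.sigma fun E => Q' E).card : ℝ) ≤ P.card * 2 ^ T := by
    rw [Finset.card_sigma]
    push_cast
    rw [← nsmul_eq_mul]
    refine Finset.sum_le_card_nsmul _ _ _ fun E hE => ?_
    simp only [hQ']
    split_ifs with h
    · have := (flog_le_iff (by positivity)).1 (hQT E h)
      linarith
    · simpa using Real.one_le_rpow (by norm_num : (1 : ℝ) ≤ 2) hT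
  have hf : flog ((P.sigma fun E => Q' E).card : ℝ) ≤ flog (P.card : ℝ) + T := by
    rw [flog_le_iff (by positivity), Real.rpow_add (by norm_num), rpow_flog (by positivity)]
    have := Real.one_le_rpow (by norm_num : (1 : ℝ) ≤ 2) hT
    linarith
  have h4 := mul_le_mul_of_nonneg_right hf (N_nonneg hN x)
  have h5 := hP.2.2.2
  linarith

lemma leaf_func {N : c00 → ℝ} {x : c00} (hN : IsSchlumprechtNorm N) (hx : x ≠ 0)
    (h : Leaf N x) : ∃ E φ, W E φ ∧ E ⊆ x.support ∧ N x ≤ φ x := by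
  obtain ⟨i, hi⟩ := h
  have hp := N_pos hN hx
  have hi0 : x i ≠ 0 := by
    intro h0; rw [h0, abs_zero] at hi; linarith
  have hs : ({i} : Finset ℕ) ⊆ x.support := by simpa using hi0
  rcases abs_choice (x i) with h | h
  · exact ⟨_, _, W.pos i, hs, by simp [hi, h]⟩
  · exact ⟨_, _, W.neg i, hs, by simp [hi, h]⟩

lemma OptP_ssub {N : c00 → ℝ} {x : c00} {P : Finset (Finset ℕ)} (hP : OptP N x P)
    {E : Finset ℕ} (hE : E ∈ P) : (proj E x).support.card < x.support.card ∧ proj E x ≠ 0 := by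
  obtain ⟨F, hF, hne⟩ := Finset.exists_mem_ne (lt_of_lt_of_le one_lt_two hP.1) E
  obtain ⟨j, hj⟩ := (hP.2.2.1 F hF).1
  have hdis := FLt.disj (hP.2.1 F hF E hE hne)
  rw [proj_support, Finset.inter_eq_right.2 (hP.2.2.1 E hE).2]
  constructor
  · apply Finset.card_lt_card
    refine ⟨(hP.2.2.1 E hE).2, fun hsub => ?_⟩
    exact Finset.disjoint_left.1 hdis hj (hsub ((hP.2.2.1 F hF).2 hj))
  · intro h0
    have := proj_support E x
    rw [h0, Finset.inter_eq_right.2 (hP.2.2.1 E hE).2] at this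
    obtain ⟨i, hi⟩ := (hP.2.2.1 E hE).1
    rw [← this] at hi
    simp at hi

lemma exp_bound {l r : ℝ} (hr : 16 ≤ r) (hl : l = r ^ 2) :
    Real.exp (40 / Real.sqrt (2 * l)) * (l + 3) ≤ Real.exp (40 / r) * (l - 6 * r) := by
  have hr0 : 0 < r := by linarith
  have hs : 4 / 3 * r ≤ Real.sqrt (2 * l) := by
    apply Real.le_sqrt_of_sq_le
    rw [hl]; nlinarith
  have h1 : 40 / Real.sqrt (2 * l) ≤ 30 / r := by
    rw [div_le_div_iff₀ (by linarith) hr0]; linarith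
  have h2 : l + 3 ≤ (1 + 10 / r) * (l - 6 * r) := by
    rw [hl]
    have : (1 + 10 / r) * (r ^ 2 - 6 * r) = r ^ 2 + 4 * r - 60 := by field_simp; ring
    rw [this]; linarith
  have h3 : 0 ≤ l - 6 * r := by rw [hl]; nlinarith
  have h4 : 1 + 10 / r ≤ Real.exp (10 / r) := by linarith [Real.add_one_le_exp (10 / r)]
  have h5 : Real.exp (40 / r) = Real.exp (30 / r) * Real.exp (10 / r) := by
    rw [← Real.exp_add]; congr 1; ring
  calc _ ≤ Real.exp (30 / r) * ((1 + 10 / r) * (l - 6 * r)) := by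
        gcongr
        nlinarith
    _ ≤ Real.exp (30 / r) * (Real.exp (10 / r) * (l - 6 * r)) := by gcongr
    _ = _ := by rw [h5]; ring

end Sch

namespace Sch

lemma large {N : c00 → ℝ} (hN : IsSchlumprechtNorm N) (x : c00) (hx : x ≠ 0)
    (P : Finset (Finset ℕ)) (hP : OptP N x P) (hl : 256 ≤ flog (P.card : ℝ)) :
    ∃ E φ, W E φ ∧ E ⊆ x.support ∧ N x ≤ Real.exp (40 / Real.sqrt (flog (P.card : ℝ))) * φ x := by
  classical
  induction hc : x.support.card using Nat.strong_induction_on generalizing x P with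
  | _ c ih =>
  subst hc
  set l := flog (P.card : ℝ) with hldef
  set r := Real.sqrt l with hrdef
  have hlr : l = r ^ 2 := (Real.sq_sqrt (by linarith)).symm
  have hr : 16 ≤ r := Real.le_sqrt_of_sq_le (by linarith)
  have hNx := N_pos hN hx
  have hQ0 : ∀ E ∈ P, ∃ Q, ¬ Leaf N (proj E x) → OptP N (proj E x) Q := by
    intro E hE
    rcases attain hN (OptP_ssub hP hE).2 with h | ⟨Q, h⟩
    · exact ⟨∅, fun h' => absurd h h'⟩
    · exact ⟨Q, fun _ => h⟩
  choose! Q hQ using hQ0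
  set c := Real.exp (40 / Real.sqrt (2 * l)) with hcdef
  have hc1 : 1 ≤ c := Real.one_le_exp (by positivity)
  set G := P.filter (fun E => Leaf N (proj E x) ∨ 2 * l ≤ flog ((Q E).card : ℝ)) with hG
  set B1 := P.filter (fun E => ¬ Leaf N (proj E x) ∧ flog ((Q E).card : ℝ) ≤ r) with hB1
  set B2 := P.filter (fun E => ¬ Leaf N (proj E x) ∧ r < flog ((Q E).card : ℝ) ∧
    flog ((Q E).card : ℝ) ≤ 2 * l) with hB2
  have hgood : ∀ E ∈ G, ∃ E' φ, W E' φ ∧ E' ⊆ (proj E x).support ∧ N (proj E x) ≤ c * φ x := by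
    intro E hE
    rw [hG, Finset.mem_filter] at hE
    obtain ⟨hEP, hE⟩ := hE
    have hss := OptP_ssub hP hEP
    by_cases hlf : Leaf N (proj E x)
    · obtain ⟨E', φ, hW, hsub, hle⟩ := leaf_func hN hss.2 hlf
      refine ⟨E', φ, hW, hsub, ?_⟩
      rw [W_local hN hW (hsub.trans (by rw [proj_support]; exact Finset.inter_subset_right))] at hle
      nlinarith [N_pos hN hss.2]
    · have h2 := hE.resolve_left hlf
      obtain ⟨E', φ, hW, hsub, hle⟩ := ih _ hss.1 _ hss.2 (Q E) (hQ E hEP hlf) (by linarith) rfl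
      refine ⟨E', φ, hW, hsub, ?_⟩
      rw [W_local hN hW (hsub.trans (by rw [proj_support]; exact Finset.inter_subset_right))] at hle
      have hpos := N_pos hN hss.2
      have hφ : 0 < φ x := by
        by_contra hcon
        have := mul_nonpos_of_nonneg_of_nonpos
          (Real.exp_pos (40 / Real.sqrt (flog ((Q E).card : ℝ)))).le (not_lt.1 hcon)
        linarith
      refine hle.trans (mul_le_mul_of_nonneg_right ?_ hφ.le)
      refine Real.exp_le_exp.2 ?_
      have : 0 < Real.sqrt (2 * l) := Real.sqrt_pos.2 (by linarith)
      exact div_le_div_of_nonneg_left (by norm_num) this (Real.sqrt_le_sqrt h2)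
  choose! E' φ hW hsub hle using hgood
  have hb1 : ∑ E ∈ B1, N (proj E x) ≤ 2 * r * N x := by
    have hm := merge hN hP (Finset.filter_subset _ _ : B1 ⊆ P) Q (T := r) (by linarith)
      (fun E hE => hQ E (Finset.mem_filter.1 hE).1 (Finset.mem_filter.1 hE).2.1)
      (fun E hE => (Finset.mem_filter.1 hE).2.2)
    have : ∑ E ∈ B1, (1 / 2) * N (proj E x) ≤
        ∑ E ∈ B1, (flog ((Q E).card : ℝ) - 1) * N (proj E x) := by
      refine Finset.sum_le_sum fun E hE => mul_le_mul_of_nonneg_right ?_ (N_nonneg hN _)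
      have := (hQ E (Finset.mem_filter.1 hE).1 (Finset.mem_filter.1 hE).2.1).1
      linarith [flog_two_le this]
    rw [← Finset.mul_sum] at this
    linarith
  have hb2 : ∑ E ∈ B2, N (proj E x) ≤ 4 * r * N x := by
    have hm := merge hN hP (Finset.filter_subset _ _ : B2 ⊆ P) Q (T := 2 * l) (by linarith)
      (fun E hE => hQ E (Finset.mem_filter.1 hE).1 (Finset.mem_filter.1 hE).2.1)
      (fun E hE => (Finset.mem_filter.1 hE).2.2.2)
    have : ∑ E ∈ B2, (r / 2) * N (proj E x) ≤
        ∑ E ∈ B2, (flog ((Q E).card : ℝ) - 1) * N (proj E x) := by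
      refine Finset.sum_le_sum fun E hE => mul_le_mul_of_nonneg_right ?_ (N_nonneg hN _)
      linarith [(Finset.mem_filter.1 hE).2.2.1]
    rw [← Finset.mul_sum] at this
    have h3 : r / 2 * ∑ E ∈ B2, N (proj E x) ≤ r / 2 * (4 * r * N x) := by
      have h4 : r / 2 * (4 * r * N x) = 2 * l * N x := by rw [hlr]; ring
      linarith
    exact le_of_mul_le_mul_left h3 (by linarith)
  have hcov : P ⊆ G ∪ (B1 ∪ B2) := by
    intro E hE
    simp only [hG, hB1, hB2, Finset.mem_union, Finset.mem_filter]
    by_cases h1 : Leaf N (proj E x)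
    · exact Or.inl ⟨hE, Or.inl h1⟩
    · rcases le_total (2 * l) (flog ((Q E).card : ℝ)) with h2 | h2
      · exact Or.inl ⟨hE, Or.inr h2⟩
      · rcases le_or_gt (flog ((Q E).card : ℝ)) r with h3 | h3
        · exact Or.inr (Or.inl ⟨hE, h1, h3⟩)
        · exact Or.inr (Or.inr ⟨hE, h1, h3, h2⟩)
  have hnn : ∀ E, 0 ≤ N (proj E x) := fun E => N_nonneg hN _
  have hun : ∀ A B : Finset (Finset ℕ), ∑ E ∈ A ∪ B, N (proj E x) ≤
      ∑ E ∈ A, N (proj E x) + ∑ E ∈ B, N (proj E x) := by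
    intro A B
    rw [← Finset.sum_union_inter]
    linarith [Finset.sum_nonneg (fun E (_ : E ∈ A ∩ B) => hnn E)]
  have htot : l * N x ≤ ∑ E ∈ G, N (proj E x) + 6 * r * N x := by
    have h1 := hP.2.2.2
    have h2 := Finset.sum_le_sum_of_subset_of_nonneg hcov (fun E _ _ => hnn E)
    have h3 := hun G (B1 ∪ B2)
    have h4 := hun B1 B2
    linarith
  have hlp : 0 < l - 6 * r := by rw [hlr]; nlinarith
  have hGne : G.Nonempty := by
    by_contra hcon
    rw [Finset.not_nonempty_iff_eq_empty] at hcon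
    rw [hcon, Finset.sum_empty] at htot
    nlinarith [mul_pos hlp hNx]
  have hsep : Sep G E' := by
    intro E hE F hF hne
    have hsE : ∀ E ∈ G, E' E ⊆ E := fun E hE =>
      (hsub E hE).trans (by rw [proj_support]; exact Finset.inter_subset_right)
    rcases hP.2.1 E (Finset.mem_filter.1 hE).1 F (Finset.mem_filter.1 hF).1 hne with h | h
    · exact Or.inl (FLt.mono h (hsE E hE) (hsE F hF))
    · exact Or.inr (FLt.mono h (hsE F hF) (hsE E hE))
  refine ⟨_, _, W.node G E' φ hGne hsep hW, ?_, ?_⟩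
  · refine Finset.biUnion_subset.2 fun E hE => (hsub E hE).trans ?_
    rw [proj_support]; exact Finset.inter_subset_left
  · simp only [LinearMap.smul_apply, LinearMap.sum_apply, smul_eq_mul]
    set S := ∑ E ∈ G, φ E x with hS
    have hS1 : ∑ E ∈ G, N (proj E x) ≤ c * S := by
      rw [hS, Finset.mul_sum]
      exact Finset.sum_le_sum fun E hE => hle E hE
    have hSp : 0 < S := by
      have : 0 < c * S := by nlinarith [mul_pos hlp hNx]
      exact (mul_pos_iff_of_pos_left (by linarith)).1 this
    have hf4 : flog 4 ≤ 3 := by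
      rw [flog_le_iff (by norm_num)]
      have : (2 : ℝ) ^ (3 : ℝ) = 8 := by
        rw [show (3 : ℝ) = ((3 : ℕ) : ℝ) by norm_num, Real.rpow_natCast]; norm_num
      rw [this]; norm_num
    have hg1 : flog (4 * G.card : ℝ) ≤ l + 3 := by
      have h1 := flog_mul_le (a := 4) (b := (G.card : ℝ)) (by norm_num) (Nat.cast_nonneg _)
      have h2 : flog (G.card : ℝ) ≤ l := flog_nat_mono (Finset.card_le_card (Finset.filter_subset _ _))
      linarith
    have hg0 := flog_four_pos (Finset.card_pos.2 hGne)
    set g := flog (4 * G.card : ℝ)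
    have hkey := exp_bound hr hlr
    have h5 : (l - 6 * r) * N x ≤ (l - 6 * r) * (Real.exp (40 / r) * (g⁻¹ * S)) := by
      calc (l - 6 * r) * N x ≤ c * S := by linarith
        _ = c * g * (g⁻¹ * S) := by field_simp
        _ ≤ c * (l + 3) * (g⁻¹ * S) := by gcongr
        _ ≤ (Real.exp (40 / r) * (l - 6 * r)) * (g⁻¹ * S) := by gcongr
        _ = _ := by ring
    exact le_of_mul_le_mul_left h5 hlp

/-- Pieces treated by the large-weight lemma. -/
def GoodV (N : c00 → ℝ) (x : c00) : Prop :=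
  Leaf N x ∨ ∃ P, OptP N x P ∧ 256 ≤ flog (P.card : ℝ)

lemma good_func {N : c00 → ℝ} (hN : IsSchlumprechtNorm N) (x : c00) (hx : x ≠ 0)
    (h : GoodV N x) : ∃ E φ, W E φ ∧ E ⊆ x.support ∧ N x ≤ Real.exp 40 * φ x := by
  rcases h with h | ⟨P, hP, hl⟩
  · obtain ⟨E, φ, hW, hs, hle⟩ := leaf_func hN hx h
    refine ⟨E, φ, hW, hs, ?_⟩
    have : 1 ≤ Real.exp 40 := Real.one_le_exp (by norm_num)
    nlinarith [N_pos hN hx]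
  · obtain ⟨E, φ, hW, hs, hle⟩ := large hN x hx P hP hl
    refine ⟨E, φ, hW, hs, ?_⟩
    have hφ : 0 < φ x := by
      by_contra hcon
      have := mul_nonpos_of_nonneg_of_nonpos
        (Real.exp_pos (40 / Real.sqrt (flog (P.card : ℝ)))).le (not_lt.1 hcon)
      linarith [N_pos hN hx]
    refine hle.trans (mul_le_mul_of_nonneg_right (Real.exp_le_exp.2 ?_) hφ.le)
    have : 1 ≤ Real.sqrt (flog (P.card : ℝ)) := Real.le_sqrt_of_sq_le (by linarith)
    rw [div_le_iff₀ (by linarith)]; linarith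

lemma sep_singleton (E : Finset ℕ) : Sep {E} id := by
  intro i hi j hj hne
  rw [Finset.mem_singleton] at hi hj
  exact absurd (hi.trans hj.symm) hne

lemma small_step {N : c00 → ℝ} (hN : IsSchlumprechtNorm N) (κ : ℝ) (hκ0 : 0 ≤ κ) (n₀ : ℕ)
    (hn : ∀ n : ℕ, flog (n : ℝ) < 256 → n ≤ n₀) (d : ℕ) : ∀ (x : c00),
    (∀ E, proj E x ≠ 0 → GoodV N (proj E x) → N (proj E x) ≤ κ) →
    ∃ B : Finset (Finset ℕ), Sep B id ∧ B.card ≤ n₀ ^ d ∧ (∀ E ∈ B, E.Nonempty ∧ E ⊆ x.support) ∧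
      (3 / 2 : ℝ) ^ d * (N x - n₀ ^ d * κ) ≤ ∑ E ∈ B, N (proj E x) := by
  classical
  have hn1 : (1 : ℝ) ≤ n₀ := by
    exact_mod_cast hn 1 (by rw [Nat.cast_one, flog_one]; norm_num)
  have hn1' : ∀ d : ℕ, (1 : ℝ) ≤ n₀ ^ d := fun d => one_le_pow₀ hn1
  have triv : ∀ (d : ℕ) (x : c00), N x ≤ κ →
      ∃ B : Finset (Finset ℕ), Sep B id ∧ B.card ≤ n₀ ^ d ∧
      (∀ E ∈ B, E.Nonempty ∧ E ⊆ x.support) ∧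
      (3 / 2 : ℝ) ^ d * (N x - n₀ ^ d * κ) ≤ ∑ E ∈ B, N (proj E x) := by
    intro d x h
    refine ⟨∅, by intro i hi; simp at hi, by simp, by simp, ?_⟩
    rw [Finset.sum_empty]
    refine mul_nonpos_of_nonneg_of_nonpos (by positivity) ?_
    nlinarith [hn1' d]
  induction d with
  | zero =>
    intro x hκ
    by_cases hx : x = 0
    · exact triv 0 x (by rw [hx, N_zero hN]; exact hκ0)
    · refine ⟨{x.support}, sep_singleton _, by simp, by simpa using hx, ?_⟩
      simp only [Finset.sum_singleton, proj_eq_self (le_refl x.support), pow_zero]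
      linarith
  | succ d ih =>
    intro x hκ
    by_cases hx : x = 0
    · exact triv _ x (by rw [hx, N_zero hN]; exact hκ0)
    by_cases hg : GoodV N x
    · have hs := proj_eq_self (le_refl x.support)
      have := hκ x.support (by rw [hs]; exact hx) (by rw [hs]; exact hg)
      rw [hs] at this
      exact triv _ x this
    have hg' := not_or.1 hg
    obtain ⟨P, hP⟩ := (attain hN hx).resolve_left hg'.1
    have hPl : flog (P.card : ℝ) < 256 := by
      by_contra hcon
      exact hg'.2 ⟨P, hP, not_lt.1 hcon⟩
    have hPn := hn _ hPl
    have hB := fun E => ih (proj E x) (by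
      intro F; rw [proj_proj]; exact hκ _)
    choose B hB1 hB2 hB3 hB4 using hB
    have hsubE : ∀ E, ∀ F ∈ B E, F ⊆ E := by
      intro E F hF
      have := (hB3 E F hF).2
      rw [proj_support] at this
      exact this.trans Finset.inter_subset_right
    have hdis : ∀ E ∈ P, ∀ E' ∈ P, E ≠ E' → Disjoint (B E) (B E') := by
      intro E hE E' hE' hne
      rw [Finset.disjoint_left]
      intro F hF hF'
      obtain ⟨i, hi⟩ := (hB3 E F hF).1
      exact Finset.disjoint_left.1 (FLt.disj (hP.2.1 E hE E' hE' hne)) (hsubE E F hF hi)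
        (hsubE E' F hF' hi)
    refine ⟨P.biUnion B, ?_, ?_, ?_, ?_⟩
    · intro F hF F' hF' hne
      rw [Finset.mem_biUnion] at hF hF'
      obtain ⟨E, hE, hF⟩ := hF
      obtain ⟨E', hE', hF'⟩ := hF'
      by_cases h : E = E'
      · subst h
        exact hB1 E F hF F' hF' hne
      · rcases hP.2.1 E hE E' hE' h with h1 | h1
        · exact Or.inl (FLt.mono h1 (hsubE _ _ hF) (hsubE _ _ hF'))
        · exact Or.inr (FLt.mono h1 (hsubE _ _ hF') (hsubE _ _ hF))
    · calc (P.biUnion B).card ≤ P.card * n₀ ^ d := Finset.card_biUnion_le_card_mul _ _ _ fun E _ => hB2 E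
        _ ≤ n₀ * n₀ ^ d := Nat.mul_le_mul_right _ hPn
        _ = n₀ ^ (d + 1) := by ring
    · intro F hF
      rw [Finset.mem_biUnion] at hF
      obtain ⟨E, hE, hF⟩ := hF
      exact ⟨(hB3 E F hF).1, (hsubE _ _ hF).trans (hP.2.2.1 E hE).2⟩
    · rw [Finset.sum_biUnion hdis]
      have h1 : ∑ E ∈ P, (3 / 2 : ℝ) ^ d * (N (proj E x) - n₀ ^ d * κ) ≤
          ∑ E ∈ P, ∑ F ∈ B E, N (proj F x) := by
        refine Finset.sum_le_sum fun E hE => (hB4 E).trans (le_of_eq ?_)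
        exact Finset.sum_congr rfl fun F hF => by rw [proj_proj_sub (hsubE _ _ hF)]
      refine le_trans ?_ h1
      rw [← Finset.mul_sum, Finset.sum_sub_distrib, Finset.sum_const, nsmul_eq_mul, pow_succ, mul_assoc]
      refine mul_le_mul_of_nonneg_left ?_ (by positivity)
      have h2 := hP.2.2.2
      have h3 := flog_two_le hP.1
      have h4 : (P.card : ℝ) ≤ n₀ := by exact_mod_cast hPn
      have h5 : (P.card : ℝ) * (n₀ ^ d * κ) ≤ n₀ * (n₀ ^ d * κ) :=
        mul_le_mul_of_nonneg_right h4 (by positivity)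
      have h6 : 3 / 2 * N x ≤ flog (P.card : ℝ) * N x :=
        mul_le_mul_of_nonneg_right h3 (N_nonneg hN x)
      have h7 : (0 : ℝ) ≤ n₀ * (n₀ ^ d * κ) := by positivity
      rw [pow_succ]
      linarith

lemma flog_pow_le {n : ℕ} (d : ℕ) : flog ((n ^ d : ℕ) : ℝ) ≤ d * flog (n : ℝ) + 1 := by
  induction d with
  | zero => simp [flog_one]
  | succ d ih =>
    have := flog_mul_le (a := ((n ^ d : ℕ) : ℝ)) (b := (n : ℝ)) (by positivity) (by positivity)
    rw [pow_succ]; push_cast at this ih ⊢; linarith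

/-- The slack lemma: the functionals in `W` are norming up to a constant. -/
lemma slack {N : c00 → ℝ} (hN : IsSchlumprechtNorm N) : ∃ C : ℝ, 1 ≤ C ∧ ∀ x : c00, x ≠ 0 →
    ∃ E φ, W E φ ∧ E ⊆ x.support ∧ N x ≤ C * φ x := by
  have hn0 : ∃ n₀ : ℕ, ∀ n : ℕ, flog (n : ℝ) < 256 → n ≤ n₀ := by
    refine ⟨2 ^ 256, fun n h => ?_⟩
    have := (flog_le_iff (by positivity)).1 h.le
    rw [show (256 : ℝ) = ((256 : ℕ) : ℝ) by norm_num, Real.rpow_natCast] at this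
    have h2 : (n : ℝ) ≤ ((2 ^ 256 : ℕ) : ℝ) := by
      rw [Nat.cast_pow, Nat.cast_ofNat]; linarith
    exact_mod_cast h2
  obtain ⟨n₀, hn⟩ := hn0
  have hn1 : 1 ≤ n₀ := hn 1 (by rw [Nat.cast_one, flog_one]; norm_num)
  have hd : ∃ d : ℕ, 2 * flog ((n₀ ^ d : ℕ) : ℝ) ≤ (3 / 2 : ℝ) ^ d := by
    have h1 : Filter.Tendsto (fun d : ℕ => (d : ℝ) ^ 1 / (3 / 2 : ℝ) ^ d) Filter.atTop (nhds 0) :=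
      tendsto_pow_const_div_const_pow_of_one_lt 1 (by norm_num)
    have h2 : Filter.Tendsto (fun d : ℕ => (3 / 2 : ℝ) ^ d) Filter.atTop Filter.atTop :=
      tendsto_pow_atTop_atTop_of_one_lt (by norm_num)
    set a := flog (n₀ : ℝ)
    have ha : 0 ≤ a := flog_nat_nonneg _
    have h3 := h1.eventually (gt_mem_nhds (show (0 : ℝ) < 1 / (4 * (a + 1)) by positivity))
    have h4 := h2.eventually_ge_atTop 4
    obtain ⟨d, h3, h4⟩ := (h3.and h4).exists
    refine ⟨d, ?_⟩
    have h5 := flog_pow_le (n := n₀) d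
    rw [pow_one, div_lt_div_iff₀ (by positivity) (by positivity)] at h3
    have : (0 : ℝ) ≤ d := by positivity
    nlinarith
  obtain ⟨d, hd⟩ := hd
  set M : ℝ := (n₀ : ℝ) ^ d with hM
  have hM1 : 1 ≤ M := one_le_pow₀ (by exact_mod_cast hn1)
  have hMn : ((n₀ ^ d : ℕ) : ℝ) = M := by push_cast; rfl
  refine ⟨4 * M * Real.exp 40, ?_, ?_⟩
  · have : 1 ≤ Real.exp 40 := Real.one_le_exp (by norm_num)
    nlinarith
  intro x hx
  have hNx := N_pos hN hx
  have hex : ∃ E, proj E x ≠ 0 ∧ GoodV N (proj E x) ∧ N x / (4 * M) < N (proj E x) := by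
    by_contra hcon
    push Not at hcon
    obtain ⟨B, hB1, hB2, hB3, hB4⟩ := small_step hN (N x / (4 * M)) (by positivity) n₀ hn d x hcon
    have h1 := sep_sum_le hN B id hB1 x
    have h2 : flog (B.card : ℝ) ≤ flog ((n₀ ^ d : ℕ) : ℝ) := flog_nat_mono hB2
    have h3 : (n₀ : ℝ) ^ d * (N x / (4 * M)) = N x / 4 := by
      rw [← hM]; field_simp
    rw [h3] at hB4
    have h4 : flog (B.card : ℝ) * N x ≤ (3 / 2 : ℝ) ^ d / 2 * N x :=
      mul_le_mul_of_nonneg_right (by linarith) hNx.le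
    have h5 : (0 : ℝ) < (3 / 2 : ℝ) ^ d * N x := by positivity
    simp only [id] at h1
    nlinarith
  obtain ⟨E, hE0, hEg, hEN⟩ := hex
  obtain ⟨E', φ, hW, hs, hle⟩ := good_func hN _ hE0 hEg
  rw [proj_support] at hs
  refine ⟨E', φ, hW, hs.trans Finset.inter_subset_left, ?_⟩
  rw [W_local hN hW (hs.trans Finset.inter_subset_right)] at hle
  rw [div_lt_iff₀ (by positivity)] at hEN
  nlinarith

end Sch

namespace Sch

/-! ### Mass -/

lemma N_single_le {N : c00 → ℝ} (hN : IsSchlumprechtNorm N) (i : ℕ) (a : ℝ) :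
    N (Finsupp.single i a) ≤ |a| := by
  by_cases ha : a = 0
  · subst ha; simp [N_zero hN]
  have hx : (Finsupp.single i a : c00) ≠ 0 := by simpa using ha
  rcases attain hN hx with ⟨j, hj⟩ | ⟨P, hP⟩
  · rw [hj, Finsupp.single_apply]
    split_ifs <;> simp
  · exfalso
    obtain ⟨E, hE⟩ := Finset.card_pos.1 (lt_of_lt_of_le two_pos hP.1)
    obtain ⟨h1, h2⟩ := OptP_ssub hP hE
    rw [Finsupp.support_single _ ha, Finset.card_singleton, Nat.lt_one_iff,
      Finset.card_eq_zero, Finsupp.support_eq_empty] at h1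
    exact h2 h1

lemma N_proj_le_card {N : c00 → ℝ} (hN : IsSchlumprechtNorm N) (E : Finset ℕ) (y : c00)
    (hy : N y ≤ 1) : N (proj E y) ≤ ((y.support ∩ E).card : ℝ) := by
  have h1 : proj E y = ∑ i ∈ y.support ∩ E, Finsupp.single i (y i) := by
    conv_lhs => rw [← Finsupp.sum_single (proj E y)]
    rw [Finsupp.sum, proj_support]
    refine Finset.sum_congr rfl fun i hi => ?_
    rw [proj_apply, if_pos (Finset.mem_inter.1 hi).2]
  rw [h1]
  refine (N_sum_le hN _ _).trans ?_
  have : ∀ i ∈ y.support ∩ E, N (Finsupp.single i (y i)) ≤ 1 := fun i _ =>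
    (N_single_le hN i (y i)).trans ((abs_le_N hN y i).trans hy)
  simpa using Finset.sum_le_card_nsmul _ _ _ this

/-- The set of masses of separated families of cardinality at most `d`. -/
def massSet (N : c00 → ℝ) (d : ℕ) (y : c00) : Set ℝ :=
  {t | ∃ (s : Finset (Finset ℕ)) (E : Finset ℕ → Finset ℕ), s.card ≤ d ∧ Sep s E ∧
    t = ∑ p ∈ s, N (proj (E p) y)}

noncomputable def Mass (N : c00 → ℝ) (d : ℕ) (y : c00) : ℝ := sSup (massSet N d y)

lemma massSet_bdd {N : c00 → ℝ} (hN : IsSchlumprechtNorm N) (d : ℕ) (y : c00) :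
    ∀ t ∈ massSet N d y, t ≤ flog (d : ℝ) * N y := by
  rintro _ ⟨s, E, hs, hE, rfl⟩
  exact (sep_sum_le hN s E hE y).trans
    (mul_le_mul_of_nonneg_right (flog_nat_mono hs) (N_nonneg hN y))

lemma massSet_ne (N : c00 → ℝ) (d : ℕ) (y : c00) : (massSet N d y).Nonempty :=
  ⟨_, ∅, id, by simp, by intro i hi; simp at hi, rfl⟩

lemma mass_le {N : c00 → ℝ} (hN : IsSchlumprechtNorm N) (d : ℕ) (y : c00) :
    Mass N d y ≤ flog (d : ℝ) * N y :=
  csSup_le (massSet_ne N d y) (massSet_bdd hN d y)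

lemma le_mass {N : c00 → ℝ} (hN : IsSchlumprechtNorm N) {d : ℕ} (y : c00)
    (s : Finset (Finset ℕ)) (E : Finset ℕ → Finset ℕ) (hs : s.card ≤ d) (hE : Sep s E) :
    ∑ p ∈ s, N (proj (E p) y) ≤ Mass N d y :=
  le_csSup ⟨_, massSet_bdd hN d y⟩ ⟨s, E, hs, hE, rfl⟩

lemma mass_nonneg {N : c00 → ℝ} (hN : IsSchlumprechtNorm N) (d : ℕ) (y : c00) :
    0 ≤ Mass N d y := by
  simpa using le_mass hN (d := d) y ∅ id (by simp) (by intro i hi; simp at hi)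

lemma N_le_mass {N : c00 → ℝ} (hN : IsSchlumprechtNorm N) {d : ℕ} (hd : 1 ≤ d) (y : c00) :
    N y ≤ Mass N d y := by
  have := le_mass hN (d := d) y {y.support} id (by simpa using hd) (sep_singleton _)
  simpa [proj_eq_self (le_refl y.support)] using this

lemma mass_le_card {N : c00 → ℝ} (hN : IsSchlumprechtNorm N) (d : ℕ) (y : c00) (hy : N y ≤ 1) :
    Mass N d y ≤ (y.support.card : ℝ) := by
  classical
  refine csSup_le (massSet_ne N d y) ?_
  rintro _ ⟨s, E, hs, hE, rfl⟩
  refine (Finset.sum_le_sum fun p _ => N_proj_le_card hN (E p) y hy).trans ?_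
  rw [← Nat.cast_sum, ← Finset.card_biUnion]
  · exact_mod_cast Finset.card_le_card (Finset.biUnion_subset.2 fun p _ => Finset.inter_subset_left)
  · intro p hp q hq hne
    exact (FLt.disj (hE p hp q hq hne)).mono Finset.inter_subset_right Finset.inter_subset_right

lemma mass_attain {N : c00 → ℝ} (hN : IsSchlumprechtNorm N) (d : ℕ) (y : c00) :
    ∃ (s : Finset (Finset ℕ)) (E : Finset ℕ → Finset ℕ), s.card ≤ d ∧ Sep s E ∧
      (∀ p, E p ⊆ y.support) ∧ Mass N d y ≤ 2 * ∑ p ∈ s, N (proj (E p) y) := by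
  rcases (mass_nonneg hN d y).eq_or_lt with h | h
  · exact ⟨∅, fun _ => ∅, by simp, by intro i hi; simp at hi, by simp, by simp [← h]⟩
  · obtain ⟨_, ⟨s, E, hs, hE, rfl⟩, ht⟩ :=
      exists_lt_of_lt_csSup (massSet_ne N d y) (show Mass N d y / 2 < sSup (massSet N d y) from by
        change _ < Mass N d y; linarith)
    refine ⟨s, fun p => E p ∩ y.support, hs, ?_, fun p => Finset.inter_subset_right, ?_⟩
    · intro p hp q hq hne
      rcases hE p hp q hq hne with h' | h'
      · exact Or.inl (FLt.mono h' Finset.inter_subset_left Finset.inter_subset_left)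
      · exact Or.inr (FLt.mono h' Finset.inter_subset_left Finset.inter_subset_left)
    · simp only [proj_inter_support]
      linarith

/-! ### Combinations of successive blocks -/

/-- Successive supports. -/
def SBlock (u : ℕ → c00) : Prop := ∀ l l', l < l' → FLt (u l).support (u l').support

noncomputable def cmb (u : ℕ → c00) (a : ℕ → ℝ) (A : Finset ℕ) : c00 := ∑ l ∈ A, a l • u l

def US (u : ℕ → c00) (B : Finset ℕ) : Finset ℕ := B.biUnion fun l => (u l).support

lemma proj_sum {ι : Type*} (E : Finset ℕ) (s : Finset ι) (g : ι → c00) :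
    proj E (∑ i ∈ s, g i) = ∑ i ∈ s, proj E (g i) := by
  classical
  induction s using Finset.induction_on with
  | empty => simp [proj_zero]
  | insert a s ha ih => rw [Finset.sum_insert ha, Finset.sum_insert ha, proj_add, ih]

lemma SBlock.disj {u : ℕ → c00} (hu : SBlock u) {l l' : ℕ} (h : l ≠ l') :
    Disjoint (u l).support (u l').support := by
  rcases lt_or_gt_of_ne h with h | h
  · exact FLt.disj (Or.inl (hu _ _ h))
  · exact FLt.disj (Or.inr (hu _ _ h))

lemma SBlock.lt {u : ℕ → c00} (hu : SBlock u) {l l' i j : ℕ} (hi : i ∈ (u l).support)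
    (hj : j ∈ (u l').support) (hij : i < j) : l ≤ l' := by
  by_contra h
  have := hu _ _ (not_le.1 h) j hj i hi
  omega

lemma proj_cmb_US {u : ℕ → c00} (hu : SBlock u) (a : ℕ → ℝ) {B A : Finset ℕ} (hBA : B ⊆ A) :
    proj (US u B) (cmb u a A) = cmb u a B := by
  classical
  unfold cmb
  rw [proj_sum, ← Finset.sum_sdiff hBA]
  have h1 : ∑ l ∈ A \ B, proj (US u B) (a l • u l) = 0 := by
    refine Finset.sum_eq_zero fun l hl => ?_
    rw [proj_smul, proj_eq_zero, smul_zero]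
    intro i hi hiU
    obtain ⟨l', hl', hi'⟩ := Finset.mem_biUnion.1 hiU
    have : l ≠ l' := fun h => (Finset.mem_sdiff.1 hl).2 (h ▸ hl')
    exact Finset.disjoint_left.1 (hu.disj this) hi hi'
  rw [h1, zero_add]
  refine Finset.sum_congr rfl fun l hl => ?_
  rw [proj_smul, proj_eq_self]
  exact Finset.subset_biUnion_of_mem (fun l => (u l).support) hl

lemma proj_cmb_sub {u : ℕ → c00} (hu : SBlock u) (a : ℕ → ℝ) {A F : Finset ℕ} {l : ℕ} (hl : l ∈ A)
    (hF : F ⊆ (u l).support) : proj F (cmb u a A) = a l • proj F (u l) := by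
  have h1 := proj_cmb_US hu a (Finset.singleton_subset_iff.2 hl)
  have h2 : F ⊆ US u {l} := by simpa [US] using hF
  rw [← proj_proj_sub h2, h1]
  simp [cmb, proj_smul]

lemma cmb_mono {N : c00 → ℝ} (hN : IsSchlumprechtNorm N) {u : ℕ → c00} (hu : SBlock u)
    (a : ℕ → ℝ) {B A : Finset ℕ} (hBA : B ⊆ A) : N (cmb u a B) ≤ N (cmb u a A) := by
  rw [← proj_cmb_US hu a hBA]; exact N_proj_le hN _ _

lemma abs_le_cmb {N : c00 → ℝ} (hN : IsSchlumprechtNorm N) {u : ℕ → c00} (hu : SBlock u)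
    (hu1 : ∀ l, N (u l) = 1) (a : ℕ → ℝ) {A : Finset ℕ} {l : ℕ} (hl : l ∈ A) :
    |a l| ≤ N (cmb u a A) := by
  have := cmb_mono hN hu a (Finset.singleton_subset_iff.2 hl)
  simpa [cmb, N_smul hN, hu1] using this

lemma US_sep {u : ℕ → c00} (hu : SBlock u) {B B' : Finset ℕ} (h : FLt B B') :
    FLt (US u B) (US u B') := by
  intro i hi j hj
  obtain ⟨l, hl, hi⟩ := Finset.mem_biUnion.1 hi
  obtain ⟨l', hl', hj⟩ := Finset.mem_biUnion.1 hj
  exact hu _ _ (h l hl l' hl') i hi j hj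

lemma cmb_coord {N : c00 → ℝ} (hN : IsSchlumprechtNorm N) {u v : ℕ → c00} (hu : SBlock u)
    (hv : SBlock v) (hu1 : ∀ l, N (u l) = 1) (hv1 : ∀ l, N (v l) = 1) (a : ℕ → ℝ) (A : Finset ℕ)
    (i : ℕ) : |cmb v a A i| ≤ N (cmb u a A) := by
  by_cases h : ∃ l ∈ A, i ∈ (v l).support
  · obtain ⟨l, hl, hi⟩ := h
    have h1 := proj_cmb_sub hv a hl (Finset.singleton_subset_iff.2 hi)
    have h2 := congrArg (fun z : c00 => z i) h1
    simp only [proj_apply, Finset.mem_singleton, if_true, Finsupp.smul_apply, smul_eq_mul] at h2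
    rw [h2, abs_mul]
    have h3 := abs_le_N hN (v l) i
    rw [hv1] at h3
    have h4 := abs_le_cmb hN hu hu1 a hl
    nlinarith [abs_nonneg (a l), abs_nonneg (v l i)]
  · push Not at h
    have : cmb v a A i = 0 := by
      unfold cmb
      rw [Finsupp.finsetSum_apply]
      refine Finset.sum_eq_zero fun l hl => ?_
      have := h l hl
      rw [Finsupp.notMem_support_iff] at this
      simp [this]
    rw [this, abs_zero]; exact N_nonneg hN _

lemma cmb_union (u : ℕ → c00) (a : ℕ → ℝ) (A : Finset ℕ) (p : ℕ → Prop) [DecidablePred p] :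
    cmb u a A = cmb u a (A.filter p) + cmb u a (A.filter fun l => ¬ p l) := by
  unfold cmb; rw [Finset.sum_filter_add_sum_filter_not]

end Sch

namespace Sch

/-! ### The comparison lemma -/

/-- `E` meets the support of `w`. -/
def Meets (E : Finset ℕ) (w : c00) : Prop := ∃ i ∈ E, i ∈ w.support

lemma not_meets_zero {N : c00 → ℝ} (hN : IsSchlumprechtNorm N) {E : Finset ℕ} {φ : c00 →ₗ[ℝ] ℝ}
    (h : W E φ) {w : c00} (hm : ¬ Meets E w) : φ w = 0 := by
  have h1 := W_abs_le hN h w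
  rw [proj_eq_zero, N_zero hN] at h1
  · exact abs_nonpos_iff.1 h1
  · intro i hi hiE; exact hm ⟨i, hiE, hi⟩

/-- Blocks met by a smaller set come first. -/
lemma meets_le {v : ℕ → c00} (hv : SBlock v) {E E' : Finset ℕ} (h : FLt E E') {l l' : ℕ}
    (h1 : Meets E (v l)) (h2 : Meets E' (v l')) : l ≤ l' := by
  obtain ⟨i, hi, hi'⟩ := h1
  obtain ⟨j, hj, hj'⟩ := h2
  exact hv.lt hi' hj' (h i hi j hj)

lemma node_part2 {N : c00 → ℝ} (hN : IsSchlumprechtNorm N) {u v : ℕ → c00} (hu : SBlock u)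
    (hv : SBlock v) {C₀ : ℝ} (hC₀ : 0 ≤ C₀) (a : ℕ → ℝ) (A : Finset ℕ)
    (s : Finset (Finset ℕ)) (E : Finset ℕ → Finset ℕ) (φ : Finset ℕ → (c00 →ₗ[ℝ] ℝ))
    (hE : Sep s E) (hW : ∀ p ∈ s, W (E p) (φ p))
    (hβ : ∀ l ∈ A, ∀ d ≤ s.card, Mass N d (v l) ≤ C₀ * Mass N d (u l))
    (ih : ∀ p ∈ s, ∀ A : Finset ℕ, ∃ b : ℕ, φ p (cmb v a A) ≤
      2 * C₀ * (N (cmb u a (A.filter (· < b))) + N (cmb u a (A.filter fun l => ¬ l < b)))) :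
    ∑ p ∈ s, φ p (cmb v a A) ≤ 2 * C₀ * (flog (4 * s.card : ℝ) * N (cmb u a A)) := by
  classical
  set D : ℕ → Finset (Finset ℕ) := fun l => s.filter (fun p => Meets (E p) (v l)) with hD
  set S := A.filter (fun l => 2 ≤ (D l).card) with hS
  set Ap : Finset ℕ → Finset ℕ :=
    fun p => A.filter (fun l => ¬ 2 ≤ (D l).card ∧ Meets (E p) (v l)) with hAp
  have hother : ∀ l ∈ S, ∀ p, ∃ p' ∈ s, p' ≠ p ∧ Meets (E p') (v l) := by
    intro l hl p
    obtain ⟨p', hp', hne⟩ := Finset.exists_mem_ne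
      (lt_of_lt_of_le one_lt_two (Finset.mem_filter.1 hl).2) p
    exact ⟨p', (Finset.mem_filter.1 hp').1, hne, (Finset.mem_filter.1 hp').2⟩
  have hApS : ∀ p, ∀ l ∈ Ap p, l ∉ S := fun p l hl hl' =>
    (Finset.mem_filter.1 hl).2.1 (Finset.mem_filter.1 hl').2
  have hApne : ∀ p ∈ s, ∀ p' ∈ s, p ≠ p' → ∀ l ∈ Ap p, l ∉ Ap p' := by
    intro p hp p' hp' hne l hl hl'
    refine (Finset.mem_filter.1 hl).2.1 ?_
    have hsub : ({p, p'} : Finset (Finset ℕ)) ⊆ D l := by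
      intro q hq
      rw [Finset.mem_insert, Finset.mem_singleton] at hq
      rcases hq with rfl | rfl
      · exact Finset.mem_filter.2 ⟨hp, (Finset.mem_filter.1 hl).2.2⟩
      · exact Finset.mem_filter.2 ⟨hp', (Finset.mem_filter.1 hl').2.2⟩
    rw [← Finset.card_pair hne]
    exact Finset.card_le_card hsub
  have hsep1' : ∀ p ∈ s, ∀ p' ∈ s, p ≠ p' → FLt (E p) (E p') → FLt (Ap p) (Ap p') := by
    intro p hp p' hp' hne h l hl l' hl'
    have h1 := meets_le hv h (Finset.mem_filter.1 hl).2.2 (Finset.mem_filter.1 hl').2.2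
    have h2 : l ≠ l' := fun e => hApne p hp p' hp' hne l hl (e ▸ hl')
    omega
  have hsep1 : ∀ p ∈ s, ∀ p' ∈ s, p ≠ p' → FLt (Ap p) (Ap p') ∨ FLt (Ap p') (Ap p) := by
    intro p hp p' hp' hne
    rcases hE p hp p' hp' hne with h | h
    · exact Or.inl (hsep1' p hp p' hp' hne h)
    · exact Or.inr (hsep1' p' hp' p hp hne.symm h)
  have hsep2 : ∀ p ∈ s, ∀ l ∈ S, FLt (Ap p) {l} ∨ FLt {l} (Ap p) := by
    intro p hp l hl
    obtain ⟨p', hp', hne, hm⟩ := hother l hl p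
    rcases hE p hp p' hp' hne.symm with h | h
    · left
      intro l' hl' l'' hl''
      rw [Finset.mem_singleton] at hl''
      subst hl''
      have h1 := meets_le hv h (Finset.mem_filter.1 hl').2.2 hm
      have h2 : l' ≠ l'' := fun e => hApS p l' hl' (e ▸ hl)
      omega
    · right
      intro l'' hl'' l' hl'
      rw [Finset.mem_singleton] at hl''
      subst hl''
      have h1 := meets_le hv h hm (Finset.mem_filter.1 hl').2.2
      have h2 : l' ≠ l'' := fun e => hApS p l' hl' (e ▸ hl)
      omega
  have hcount : ∑ l ∈ S, (D l).card ≤ 2 * s.card := by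
    have h1 : ∑ l ∈ S, (D l).card = ∑ p ∈ s, (S.filter fun l => Meets (E p) (v l)).card :=
      Finset.sum_card_bipartiteAbove_eq_sum_card_bipartiteBelow
        (s := S) (t := s) (fun l p => Meets (E p) (v l))
    rw [h1, mul_comm, ← smul_eq_mul]
    refine Finset.sum_le_card_nsmul _ _ _ fun p hp => ?_
    set T := S.filter fun l => Meets (E p) (v l) with hT
    rcases T.eq_empty_or_nonempty with h0 | hne
    · rw [h0]; simp
    refine le_trans (Finset.card_le_card (t := {T.min' hne, T.max' hne}) ?_) Finset.card_le_two
    intro l hl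
    rw [Finset.mem_insert, Finset.mem_singleton]
    by_contra hcon
    rw [not_or] at hcon
    have h2 := T.min'_le l hl
    have h3 := T.le_max' l hl
    have h4 := (Finset.mem_filter.1 (T.min'_mem hne)).2
    have h5 := (Finset.mem_filter.1 (T.max'_mem hne)).2
    obtain ⟨p', hp', hne', hm⟩ := hother l (Finset.mem_filter.1 hl).1 p
    rcases hE p hp p' hp' hne'.symm with h | h
    · have := meets_le hv h h5 hm
      omega
    · have := meets_le hv h hm h4
      omega
  choose! b hb using fun p hp => ih p hp (Ap p)
  choose R F hRc hRs hRsub hRm using fun l => mass_attain hN (D l).card (u l)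
  set z := cmb u a A with hz
  set K : (Finset ℕ × Bool) ⊕ (Σ _ : ℕ, Finset ℕ) → Finset ℕ := fun i => match i with
    | Sum.inl (p, true) => (Ap p).filter (· < b p)
    | Sum.inl (p, false) => (Ap p).filter (fun l => ¬ l < b p)
    | Sum.inr ⟨l, _⟩ => {l} with hK
  set G : (Finset ℕ × Bool) ⊕ (Σ _ : ℕ, Finset ℕ) → Finset ℕ := fun i => match i with
    | Sum.inl (p, true) => US u ((Ap p).filter (· < b p))
    | Sum.inl (p, false) => US u ((Ap p).filter (fun l => ¬ l < b p))
    | Sum.inr ⟨l, q⟩ => F l q with hG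
  have hGK : ∀ i, G i ⊆ US u (K i) := by
    rintro (⟨p, _ | _⟩ | ⟨l, q⟩)
    · exact le_refl _
    · exact le_refl _
    · simp only [hG, hK, US, Finset.singleton_biUnion]
      exact hRsub l q
  have hKsub : ∀ p c, K (Sum.inl (p, c)) ⊆ Ap p := by
    rintro p (_ | _)
    · exact Finset.filter_subset _ _
    · exact Finset.filter_subset _ _
  set T : Finset ((Finset ℕ × Bool) ⊕ (Σ _ : ℕ, Finset ℕ)) :=
    (s ×ˢ Finset.univ).disjSum (S.sigma fun l => R l) with hT
  have hor : ∀ {X Y X' Y' : Finset ℕ}, (FLt X Y ∨ FLt Y X) → X' ⊆ X → Y' ⊆ Y →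
      (FLt X' Y' ∨ FLt Y' X') := by
    intro X Y X' Y' h hX hY
    rcases h with h | h
    · exact Or.inl (FLt.mono h hX hY)
    · exact Or.inr (FLt.mono h hY hX)
  have hUS : ∀ {X Y : Finset ℕ}, (FLt X Y ∨ FLt Y X) →
      (FLt (US u X) (US u Y) ∨ FLt (US u Y) (US u X)) := fun h =>
    h.imp (US_sep hu) (US_sep hu)
  have hsepT : Sep T G := by
    rintro (⟨p, c⟩ | ⟨l, q⟩) hi (⟨p', c'⟩ | ⟨l', q'⟩) hj hne
    · rw [hT, Finset.inl_mem_disjSum, Finset.mem_product] at hi hj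
      refine hor (hUS ?_) (hGK _) (hGK _)
      by_cases hp : p = p'
      · subst hp
        cases c <;> cases c'
        · exact absurd rfl hne
        · right
          intro l hl l' hl'
          have h1 := (Finset.mem_filter.1 hl).2
          have h2 := (Finset.mem_filter.1 hl').2
          omega
        · left
          intro l hl l' hl'
          have h1 := (Finset.mem_filter.1 hl).2
          have h2 := (Finset.mem_filter.1 hl').2
          omega
        · exact absurd rfl hne
      · exact hor (hsep1 p hi.1 p' hj.1 hp) (hKsub _ _) (hKsub _ _)
    · rw [hT, Finset.inl_mem_disjSum, Finset.mem_product] at hi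
      rw [hT, Finset.inr_mem_disjSum, Finset.mem_sigma] at hj
      exact hor (hUS (hor (hsep2 p hi.1 l' hj.1) (hKsub _ _) (le_refl _))) (hGK _) (hGK (Sum.inr ⟨l', q'⟩))
    · rw [hT, Finset.inl_mem_disjSum, Finset.mem_product] at hj
      rw [hT, Finset.inr_mem_disjSum, Finset.mem_sigma] at hi
      exact (hor (hUS (hor (hsep2 p' hj.1 l hi.1) (hKsub _ _) (le_refl _))) (hGK _)
        (hGK (Sum.inr ⟨l, q⟩))).symm
    · rw [hT, Finset.inr_mem_disjSum, Finset.mem_sigma] at hi hj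
      by_cases hl : l = l'
      · subst hl
        have hq : q ≠ q' := fun e => hne (by rw [e])
        exact hRs l q hi.2 q' hj.2 hq
      · refine hor ?_ (hRsub l q) (hRsub l' q')
        rcases lt_or_gt_of_ne hl with h | h
        · exact Or.inl (hu _ _ h)
        · exact Or.inr (hu _ _ h)
  have hcardT : T.card ≤ 4 * s.card := by
    rw [hT, Finset.card_disjSum, Finset.card_product, Finset.card_sigma]
    have : ∑ l ∈ S, (R l).card ≤ ∑ l ∈ S, (D l).card := Finset.sum_le_sum fun l _ => hRc l
    simp
    omega
  have hmain := sep_sum_le hN T G hsepT z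
  have hmain2 : ∑ i ∈ T, N (proj (G i) z) ≤ flog (4 * s.card : ℝ) * N z := by
    refine hmain.trans (mul_le_mul_of_nonneg_right ?_ (N_nonneg hN _))
    have := flog_nat_mono hcardT
    push_cast at this; exact this
  have hsplit : ∑ i ∈ T, N (proj (G i) z) =
      ∑ p ∈ s, (N (cmb u a ((Ap p).filter (· < b p))) +
        N (cmb u a ((Ap p).filter fun l => ¬ l < b p))) +
      ∑ l ∈ S, ∑ q ∈ R l, |a l| * N (proj (F l q) (u l)) := by
    rw [hT, Finset.sum_disjSum, Finset.sum_product, Finset.sum_sigma]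
    congr 1
    · refine Finset.sum_congr rfl fun p _ => ?_
      rw [Fintype.sum_bool]
      simp only [hG, hz]
      rw [proj_cmb_US hu a ((Finset.filter_subset _ _).trans (Finset.filter_subset _ _)),
        proj_cmb_US hu a ((Finset.filter_subset _ _).trans (Finset.filter_subset _ _))]
    · refine Finset.sum_congr rfl fun l hl => Finset.sum_congr rfl fun q _ => ?_
      simp only [hG, hz]
      rw [proj_cmb_sub hu a (Finset.mem_filter.1 hl).1 (hRsub l q), N_smul hN]
  have hdec : ∀ p ∈ s, φ p (cmb v a A) = ∑ l ∈ S, a l * φ p (v l) + φ p (cmb v a (Ap p)) := by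
    intro p hp
    unfold cmb
    simp only [map_sum, map_smul, smul_eq_mul]
    rw [← Finset.sum_filter_add_sum_filter_not A (fun l => 2 ≤ (D l).card)]
    congr 1
    simp only [hAp]
    rw [← Finset.filter_filter, Finset.sum_filter (fun l => Meets (E p) (v l))]
    refine Finset.sum_congr rfl fun l _ => ?_
    split_ifs with h
    · rfl
    · rw [not_meets_zero hN (hW p hp) h, mul_zero]
  have hSle : ∑ p ∈ s, ∑ l ∈ S, a l * φ p (v l) ≤
      2 * C₀ * ∑ l ∈ S, ∑ q ∈ R l, |a l| * N (proj (F l q) (u l)) := by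
    rw [Finset.sum_comm, Finset.mul_sum]
    refine Finset.sum_le_sum fun l hl => ?_
    rw [← Finset.mul_sum, ← Finset.mul_sum]
    have h1 : ∑ p ∈ s, φ p (v l) = ∑ p ∈ D l, φ p (v l) := by
      simp only [hD]
      rw [Finset.sum_filter]
      refine Finset.sum_congr rfl fun p hp => ?_
      split_ifs with h
      · rfl
      · exact not_meets_zero hN (hW p hp) h
    have h2 : |∑ p ∈ s, φ p (v l)| ≤ Mass N (D l).card (v l) := by
      rw [h1]
      refine (Finset.abs_sum_le_sum_abs _ _).trans ?_
      refine (Finset.sum_le_sum fun p hp => W_abs_le hN (hW p (Finset.mem_filter.1 hp).1) (v l)).trans ?_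
      refine le_mass hN (v l) (D l) E le_rfl ?_
      exact fun p hp q hq hne => hE p (Finset.mem_filter.1 hp).1 q (Finset.mem_filter.1 hq).1 hne
    have h3 := hβ l (Finset.mem_filter.1 hl).1 (D l).card (Finset.card_le_card (Finset.filter_subset _ _))
    have h4 := hRm l
    calc a l * ∑ p ∈ s, φ p (v l) ≤ |a l| * |∑ p ∈ s, φ p (v l)| := by
          rw [← abs_mul]; exact le_abs_self _
      _ ≤ |a l| * (C₀ * (2 * ∑ q ∈ R l, N (proj (F l q) (u l)))) := by
          refine mul_le_mul_of_nonneg_left ?_ (abs_nonneg _)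
          exact h2.trans (h3.trans (mul_le_mul_of_nonneg_left h4 hC₀))
      _ = _ := by ring
  have hfin : ∑ p ∈ s, φ p (cmb v a A) ≤ 2 * C₀ * ∑ i ∈ T, N (proj (G i) z) := by
    rw [hsplit, mul_add, Finset.sum_congr rfl hdec, Finset.sum_add_distrib, Finset.mul_sum]
    have := Finset.sum_le_sum hb
    linarith
  exact hfin.trans (mul_le_mul_of_nonneg_left hmain2 (by linarith))

/-- One-sided comparison hypothesis. -/
def CompHyp (N : c00 → ℝ) (C₀ : ℝ) (u v : ℕ → c00) : Prop :=
  ∀ m : ℕ, 1 ≤ m → ∃ b : ℕ,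
    (∀ (A : Finset ℕ) (a : ℕ → ℝ), (∀ l ∈ A, l < b) →
      ∑ l ∈ A, |a l| * Mass N m (v l) ≤ C₀ * (flog (m : ℝ) * N (cmb u a A))) ∧
    (∀ l, b ≤ l → ∀ d ≤ m, Mass N d (v l) ≤ C₀ * Mass N d (u l))

lemma compare_W {N : c00 → ℝ} (hN : IsSchlumprechtNorm N) {u v : ℕ → c00} (hu : SBlock u)
    (hv : SBlock v) (hu1 : ∀ l, N (u l) = 1) (hv1 : ∀ l, N (v l) = 1) {C₀ : ℝ} (hC₀ : 1 ≤ C₀)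
    (hH : CompHyp N C₀ u v) (a : ℕ → ℝ) {E : Finset ℕ} {φ : c00 →ₗ[ℝ] ℝ} (hW : W E φ) :
    ∀ A : Finset ℕ, ∃ b : ℕ, φ (cmb v a A) ≤
      2 * C₀ * (N (cmb u a (A.filter (· < b))) + N (cmb u a (A.filter fun l => ¬ l < b))) := by
  classical
  have hleaf : ∀ (A : Finset ℕ) (t : ℝ) (i : ℕ), t ≤ |cmb v a A i| → ∃ b : ℕ, t ≤
      2 * C₀ * (N (cmb u a (A.filter (· < b))) + N (cmb u a (A.filter fun l => ¬ l < b))) := by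
    intro A t i ht
    refine ⟨0, ?_⟩
    have h1 := cmb_coord hN hu hv hu1 hv1 a A i
    have h2 : A.filter (fun l => ¬ l < 0) = A := Finset.filter_true_of_mem (by simp)
    rw [h2]
    have h3 := N_nonneg hN (cmb u a (A.filter (· < 0)))
    have h4 := N_nonneg hN (cmb u a A)
    nlinarith
  induction hW with
  | pos i => exact fun A => hleaf A _ i (le_abs_self _)
  | neg i => exact fun A => hleaf A _ i (neg_le_abs _)
  | node s E φ hs hE hW ih =>
    intro A
    have hs1 := Finset.card_pos.2 hs
    obtain ⟨b, hα, hβ⟩ := hH s.card hs1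
    refine ⟨b, ?_⟩
    have hg := flog_four_pos hs1
    have hgf := flog_le_four s.card
    simp only [LinearMap.smul_apply, LinearMap.sum_apply, smul_eq_mul]
    rw [inv_mul_le_iff₀ (by linarith)]
    set A1 := A.filter (· < b)
    set A2 := A.filter fun l => ¬ l < b
    have h2 := node_part2 hN hu hv (by linarith) a A2 s E φ hE hW
      (fun l hl d hd => hβ l (not_lt.1 (Finset.mem_filter.1 hl).2) d hd) ih
    have h1 : ∑ p ∈ s, φ p (cmb v a A1) ≤ C₀ * (flog (s.card : ℝ) * N (cmb u a A1)) := by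
      refine le_trans ?_ (hα A1 a fun l hl => (Finset.mem_filter.1 hl).2)
      unfold cmb
      simp only [map_sum, map_smul, smul_eq_mul]
      rw [Finset.sum_comm]
      refine Finset.sum_le_sum fun l _ => ?_
      rw [← Finset.mul_sum]
      refine (le_abs_self _).trans ?_
      rw [abs_mul]
      refine mul_le_mul_of_nonneg_left ?_ (abs_nonneg _)
      refine (Finset.abs_sum_le_sum_abs _ _).trans ?_
      refine (Finset.sum_le_sum fun p hp => W_abs_le hN (hW p hp) (v l)).trans ?_
      exact le_mass hN (v l) s E le_rfl hE
    have h3 : ∑ p ∈ s, φ p (cmb v a A) =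
        ∑ p ∈ s, φ p (cmb v a A1) + ∑ p ∈ s, φ p (cmb v a A2) := by
      rw [← Finset.sum_add_distrib]
      refine Finset.sum_congr rfl fun p _ => ?_
      rw [cmb_union v a A (· < b), map_add]
    rw [h3]
    have h4 := N_nonneg hN (cmb u a A1)
    have h5 : C₀ * (flog (s.card : ℝ) * N (cmb u a A1)) ≤
        2 * C₀ * (flog (4 * s.card : ℝ) * N (cmb u a A1)) := by
      have : flog (s.card : ℝ) * N (cmb u a A1) ≤ flog (4 * s.card : ℝ) * N (cmb u a A1) :=
        mul_le_mul_of_nonneg_right hgf h4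
      have h6 : 0 ≤ flog (4 * s.card : ℝ) * N (cmb u a A1) := mul_nonneg (by linarith) h4
      nlinarith
    nlinarith

lemma compare {N : c00 → ℝ} (hN : IsSchlumprechtNorm N) {u v : ℕ → c00} (hu : SBlock u)
    (hv : SBlock v) (hu1 : ∀ l, N (u l) = 1) (hv1 : ∀ l, N (v l) = 1) {C₀ : ℝ} (hC₀ : 1 ≤ C₀)
    (hH : CompHyp N C₀ u v) : ∃ C : ℝ, 1 ≤ C ∧ ∀ (a : ℕ → ℝ) (A : Finset ℕ),
      N (cmb v a A) ≤ C * N (cmb u a A) := by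
  obtain ⟨Cs, hCs, hs⟩ := slack hN
  refine ⟨Cs * (4 * C₀), by nlinarith, fun a A => ?_⟩
  by_cases h0 : cmb v a A = 0
  · rw [h0, N_zero hN]
    exact mul_nonneg (by nlinarith) (N_nonneg hN _)
  obtain ⟨E, φ, hW, _, hle⟩ := hs _ h0
  obtain ⟨b, hb⟩ := compare_W hN hu hv hu1 hv1 hC₀ hH a hW A
  have h1 := cmb_mono hN hu a (Finset.filter_subset (· < b) A)
  have h2 := cmb_mono hN hu a (Finset.filter_subset (fun l => ¬ l < b) A)
  have h3 : φ (cmb v a A) ≤ 4 * C₀ * N (cmb u a A) := by nlinarith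
  rw [mul_assoc]
  exact hle.trans (mul_le_mul_of_nonneg_left h3 (by linarith))

end Sch

namespace Sch

/-! ### Stabilization -/

lemma spread {N : c00 → ℝ} (hN : IsSchlumprechtNorm N) {u : ℕ → c00} (hu : SBlock u)
    (a : ℕ → ℝ) (B : Finset ℕ) {m : ℕ} (hm : 1 ≤ m) (hB : B.card ≤ m) {η : ℝ}
    (hη : ∀ l ∈ B, η * flog (m : ℝ) ≤ Mass N m (u l)) :
    η * ∑ l ∈ B, |a l| ≤ 4 * N (cmb u a B) := by
  classical
  choose R F hRc hRs hRsub hRm using fun l => mass_attain hN m (u l)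
  have hf := flog_one_le hm
  have hsep : Sep (B.sigma fun l => R l) (fun p : (Σ _ : ℕ, Finset ℕ) => F p.1 p.2) := by
    rintro ⟨l, q⟩ hi ⟨l', q'⟩ hj hne
    rw [Finset.mem_sigma] at hi hj
    by_cases hl : l = l'
    · subst hl
      have hq : q ≠ q' := fun e => hne (by rw [e])
      exact hRs l q hi.2 q' hj.2 hq
    · rcases lt_or_gt_of_ne hl with h | h
      · exact Or.inl (FLt.mono (hu _ _ h) (hRsub l q) (hRsub l' q'))
      · exact Or.inr (FLt.mono (hu _ _ h) (hRsub l' q') (hRsub l q))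
  have h1 := sep_sum_le hN _ _ hsep (cmb u a B)
  rw [Finset.sum_sigma] at h1
  have hcard : (B.sigma fun l => R l).card ≤ m * m := by
    rw [Finset.card_sigma]
    calc _ ≤ B.card • m := Finset.sum_le_card_nsmul _ _ _ fun l _ => hRc l
      _ ≤ m * m := Nat.mul_le_mul_right _ hB
  have h2 : flog ((B.sigma fun l => R l).card : ℝ) ≤ 2 * flog (m : ℝ) := by
    have h3 := flog_nat_mono hcard
    have h4 := flog_mul_le (a := (m : ℝ)) (b := (m : ℝ)) (Nat.cast_nonneg _) (Nat.cast_nonneg _)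
    push_cast at h3
    linarith
  have h5 := mul_le_mul_of_nonneg_right h2 (N_nonneg hN (cmb u a B))
  have h6 : ∑ l ∈ B, |a l| * (η * flog (m : ℝ)) ≤
      2 * ∑ l ∈ B, ∑ q ∈ R l, N (proj (F l q) (cmb u a B)) := by
    rw [Finset.mul_sum]
    refine Finset.sum_le_sum fun l hl => ?_
    have h7 : ∑ q ∈ R l, N (proj (F l q) (cmb u a B)) = |a l| * ∑ q ∈ R l, N (proj (F l q) (u l)) := by
      rw [Finset.mul_sum]
      exact Finset.sum_congr rfl fun q _ => by rw [proj_cmb_sub hu a hl (hRsub l q), N_smul hN]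
    rw [h7]
    have h8 := mul_le_mul_of_nonneg_left ((hη l hl).trans (hRm l)) (abs_nonneg (a l))
    linarith
  rw [← Finset.sum_mul] at h6
  have h9 : (η * ∑ l ∈ B, |a l|) * flog (m : ℝ) ≤ (4 * N (cmb u a B)) * flog (m : ℝ) := by
    have e : (η * ∑ l ∈ B, |a l|) * flog (m : ℝ) = (∑ l ∈ B, |a l|) * (η * flog (m : ℝ)) := by ring
    rw [e]
    linarith
  exact le_of_mul_le_mul_right h9 (by linarith)

/-- The data of a stabilized sequence. -/
structure Stab (N : c00 → ℝ) (k : ℕ → ℕ) (y : ℕ → c00) (M : ℕ → ℕ) (L : ℕ → ℝ) (δ : ℝ) : Prop where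
  sb : SBlock y
  n1 : ∀ l, N (y l) = 1
  mono : StrictMono M
  stab : ∀ i j d, i ≤ j → d ≤ M i →
    3 / 4 * L d ≤ Mass N d (y j) ∧ Mass N d (y j) ≤ 5 / 4 * L d
  supp : ∀ i, ((∑ j ∈ Finset.range i, (y j).support.card : ℕ) : ℝ) ≤ flog (M i : ℝ)
  dpos : 0 < δ
  cases : (∀ i, ∃ m, m ≤ M i ∧ k i + 1 ≤ m ∧ δ * flog (m : ℝ) ≤ L m) ∨
    (∀ i, ∀ m, M i ≤ m → L m ≤ flog (m : ℝ) / (2 * (i + 1)))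

lemma SBlock.comp {y : ℕ → c00} (hy : SBlock y) {s : ℕ → ℕ} (hs : StrictMono s) :
    SBlock (fun i => y (s i)) := fun _ _ h => hy _ _ (hs h)

lemma compHyp_of_stab {N : c00 → ℝ} (hN : IsSchlumprechtNorm N) {k : ℕ → ℕ} {y : ℕ → c00}
    {M : ℕ → ℕ} {L : ℕ → ℝ} {δ : ℝ} (h : Stab N k y M L δ) {s t : ℕ → ℕ} (hs : StrictMono s)
    (ht : StrictMono t) (htk : ∀ i, t i ≤ k i) :
    CompHyp N (3 + 6 / δ) (fun i => y (s i)) (fun i => y (t i)) := by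
  classical
  have hδ := h.dpos
  have hC : 3 ≤ 3 + 6 / δ := by have : 0 < 6 / δ := by positivity
                                linarith
  have hu := h.sb.comp hs
  have hbeta : ∀ i m, m ≤ M i → ∀ l, i ≤ l → ∀ d ≤ m,
      Mass N d (y (t l)) ≤ (3 + 6 / δ) * Mass N d (y (s l)) := by
    intro i m hm l hl d hd
    have h1 := h.stab i (t l) d (hl.trans ht.le_apply) (hd.trans hm)
    have h2 := h.stab i (s l) d (hl.trans hs.le_apply) (hd.trans hm)
    have h3 := mass_nonneg hN d (y (s l))
    nlinarith
  intro m hm1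
  have hex : ∃ n, m ≤ M n := ⟨m, h.mono.le_apply⟩
  obtain ⟨n, hn⟩ : ∃ n, Nat.find hex = n := ⟨_, rfl⟩
  have hnm : m ≤ M n := hn ▸ Nat.find_spec hex
  rcases n with _ | i
  · refine ⟨0, ?_, hbeta 0 m hnm⟩
    intro A a hA
    have : A = ∅ := Finset.eq_empty_of_forall_notMem fun l hl => by simpa using hA l hl
    subst this
    rw [Finset.sum_empty]
    exact mul_nonneg (by linarith) (mul_nonneg (flog_nat_nonneg _) (N_nonneg hN _))
  have hmi : M i < m := by
    have := Nat.find_min hex (m := i) (by omega)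
    omega
  refine ⟨i + 1, ?_, hbeta (i + 1) m hnm⟩
  intro A a hA
  set X := N (cmb (fun i => y (s i)) a A) with hX
  have hX0 : 0 ≤ X := N_nonneg hN _
  have haX : ∀ l ∈ A, |a l| ≤ X := fun l hl => abs_le_cmb hN hu (fun l => h.n1 _) a hl
  set f := flog (m : ℝ) with hf
  have hf1 : 1 ≤ f := flog_one_le hm1
  have hmass : ∀ l, Mass N m (y l) ≤ f := fun l => by
    have := mass_le hN m (y l)
    rwa [h.n1, mul_one] at this
  have hcardA : A.card ≤ i + 1 := by
    have : A ⊆ Finset.range (i + 1) := fun l hl => Finset.mem_range.2 (hA l hl)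
    simpa using Finset.card_le_card this
  have hhead : ∑ l ∈ A.filter (fun l => t l < i), |a l| * Mass N m (y (t l)) ≤ f * X := by
    have h1 : ∑ l ∈ A.filter (fun l => t l < i), |a l| * Mass N m (y (t l)) ≤
        ∑ l ∈ A.filter (fun l => t l < i), X * ((y (t l)).support.card : ℝ) := by
      refine Finset.sum_le_sum fun l hl => ?_
      exact mul_le_mul (haX l (Finset.mem_filter.1 hl).1) (mass_le_card hN m _ (h.n1 _).le)
        (mass_nonneg hN _ _) hX0
    have h2 : ∑ l ∈ A.filter (fun l => t l < i), ((y (t l)).support.card : ℝ) ≤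
        ∑ j ∈ Finset.range i, ((y j).support.card : ℝ) := by
      rw [← Finset.sum_image (s := A.filter (fun l => t l < i)) (g := t)
        (f := fun j => ((y j).support.card : ℝ)) (fun _ _ _ _ e => ht.injective e)]
      refine Finset.sum_le_sum_of_subset_of_nonneg ?_ (fun _ _ _ => Nat.cast_nonneg _)
      intro j hj
      obtain ⟨l, hl, rfl⟩ := Finset.mem_image.1 hj
      exact Finset.mem_range.2 (Finset.mem_filter.1 hl).2
    have h3 := h.supp i
    push_cast at h3
    have h4 : flog (M i : ℝ) ≤ f := flog_nat_mono hmi.le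
    rw [← Finset.mul_sum] at h1
    have h5 := mul_le_mul_of_nonneg_left (h2.trans (h3.trans h4)) hX0
    linarith
  rw [← Finset.sum_filter_add_sum_filter_not A (fun l => t l < i)]
  set B := A.filter (fun l => ¬ t l < i) with hB
  suffices hrest : ∑ l ∈ B, |a l| * Mass N m (y (t l)) ≤ (2 + 6 / δ) * (f * X) by
    linarith
  have hfX : 0 ≤ f * X := mul_nonneg (by linarith) hX0
  have hδ' : 0 ≤ 6 / δ := by positivity
  rcases h.cases with hP | hnP
  · rcases B.eq_empty_or_nonempty with h0 | hne
    · rw [h0, Finset.sum_empty]; exact mul_nonneg (by linarith) hfX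
    obtain ⟨m', hm'M, hm'k, hm'L⟩ := hP (B.min' hne)
    set i₀ := B.min' hne with hi0
    have hi0B := B.min'_mem hne
    have h1 : i ≤ t i₀ := not_lt.1 (Finset.mem_filter.1 hi0B).2
    have h2 := htk i₀
    have hBc : B.card ≤ m' := by
      have : B.card ≤ A.card := Finset.card_le_card (Finset.filter_subset (fun l => ¬ t l < i) A)
      omega
    have h3 := spread hN hu a B (m := m') (by omega) hBc (η := 3 / 4 * δ) (by
      intro l hl
      have h4 := (h.stab i₀ (s l) m' ((B.min'_le l hl).trans hs.le_apply) hm'M).1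
      have h5 : 3 / 4 * (δ * flog (m' : ℝ)) ≤ Mass N m' (y (s l)) := by linarith
      linarith)
    have h6 := cmb_mono hN hu a (Finset.filter_subset (fun l => ¬ t l < i) A)
    have h7 : ∑ l ∈ B, |a l| ≤ 6 / δ * X := by
      have h8 : δ * ∑ l ∈ B, |a l| ≤ 6 * X := by
        have : 3 / 4 * (δ * ∑ l ∈ B, |a l|) ≤ 4 * X := by
          rw [← mul_assoc]; exact h3.trans (by linarith)
        linarith
      rw [div_mul_eq_mul_div, le_div_iff₀ hδ]; linarith
    have h9 : ∑ l ∈ B, |a l| * Mass N m (y (t l)) ≤ (∑ l ∈ B, |a l|) * f := by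
      rw [Finset.sum_mul]
      exact Finset.sum_le_sum fun l _ => mul_le_mul_of_nonneg_left (hmass _) (abs_nonneg _)
    have h10 := mul_le_mul_of_nonneg_right h7 (show (0 : ℝ) ≤ f by linarith)
    nlinarith
  · have h1 : ∑ l ∈ B.filter (fun l => t l = i), |a l| * Mass N m (y (t l)) ≤ f * X := by
      have hc : (B.filter (fun l => t l = i)).card ≤ 1 := by
        refine Finset.card_le_one.2 fun l hl l' hl' => ht.injective ?_
        rw [(Finset.mem_filter.1 hl).2, (Finset.mem_filter.1 hl').2]
      have h2 := Finset.sum_le_card_nsmul (B.filter (fun l => t l = i))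
        (fun l => |a l| * Mass N m (y (t l))) (f * X) (by
          intro l hl
          have hlA := (Finset.mem_filter.1 (Finset.mem_filter.1 hl).1).1
          rw [mul_comm f]
          exact mul_le_mul (haX l hlA) (hmass _) (mass_nonneg hN _ _) hX0)
      refine h2.trans ?_
      rw [nsmul_eq_mul]
      have : ((B.filter (fun l => t l = i)).card : ℝ) ≤ 1 := by exact_mod_cast hc
      nlinarith
    have h2 : ∑ l ∈ B.filter (fun l => ¬ t l = i), |a l| * Mass N m (y (t l)) ≤ f * X := by
      have hi1 : (0 : ℝ) < (i : ℝ) + 1 := by positivity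
      have h3 := Finset.sum_le_card_nsmul (B.filter (fun l => ¬ t l = i))
        (fun l => |a l| * Mass N m (y (t l))) (X * (f / (i + 1))) (by
          intro l hl
          have hlB := Finset.mem_filter.1 (Finset.mem_filter.1 hl).1
          have hne := (Finset.mem_filter.1 hl).2
          refine mul_le_mul (haX l hlB.1) ?_ (mass_nonneg hN _ _) hX0
          have h4 := (h.stab (i + 1) (t l) m (by omega) hnm).2
          have h5 := hnP i m hmi.le
          have h6 : flog (m : ℝ) / (2 * ((i : ℝ) + 1)) = f / (i + 1) / 2 := by
            rw [← hf]; field_simp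
          have h7 : 0 ≤ f / ((i : ℝ) + 1) := by positivity
          rw [h6] at h5
          linarith)
      refine h3.trans ?_
      rw [nsmul_eq_mul]
      have hc : ((B.filter (fun l => ¬ t l = i)).card : ℝ) ≤ (i : ℝ) + 1 := by
        have := Finset.card_le_card ((Finset.filter_subset (fun l => ¬ t l = i) B).trans
          (Finset.filter_subset (fun l => ¬ t l < i) A))
        exact_mod_cast this.trans hcardA
      calc _ ≤ ((i : ℝ) + 1) * (X * (f / (i + 1))) := by
            refine mul_le_mul_of_nonneg_right hc (by positivity)
        _ = f * X := by field_simp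
    rw [← Finset.sum_filter_add_sum_filter_not B (fun l => t l = i)]
    nlinarith

lemma build_seq (J h σ : ℕ → ℕ) : ∃ φ M : ℕ → ℕ, StrictMono φ ∧ StrictMono M ∧ (∀ i, h i ≤ M i) ∧
    (∀ i, J (M i) ≤ φ i) ∧ (∀ i, 2 ^ σ (φ i + 1) ≤ M (i + 1)) := by
  let step : ℕ → ℕ × ℕ → ℕ × ℕ := fun i q =>
    (max (q.1 + 1) (J (max (q.2 + 1) (max (h (i + 1)) (2 ^ σ (q.1 + 1))))),
      max (q.2 + 1) (max (h (i + 1)) (2 ^ σ (q.1 + 1))))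
  let g : ℕ → ℕ × ℕ := fun n => Nat.rec (J (h 0), h 0) step n
  have hg : ∀ i, g (i + 1) = step i (g i) := fun i => rfl
  refine ⟨fun i => (g i).1, fun i => (g i).2, strictMono_nat_of_lt_succ ?_,
    strictMono_nat_of_lt_succ ?_, ?_, ?_, ?_⟩
  · intro i; rw [hg]; exact lt_of_lt_of_le (Nat.lt_succ_self _) (le_max_left _ _)
  · intro i; rw [hg]; exact lt_of_lt_of_le (Nat.lt_succ_self _) (le_max_left _ _)
  · rintro (_ | i)
    · exact le_refl _
    · simp only [hg]; exact le_trans (le_max_left _ _) (le_max_right _ _)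
  · rintro (_ | i)
    · exact le_refl _
    · simp only [hg]; exact le_max_right _ _
  · intro i
    simp only [hg]; exact le_trans (le_max_right _ _) (le_max_right _ _)

lemma mass_zero {N : c00 → ℝ} (hN : IsSchlumprechtNorm N) (y : c00) : Mass N 0 y = 0 := by
  refine le_antisymm ?_ (mass_nonneg hN _ _)
  have := mass_le hN 0 y
  simpa [flog_zero] using this

lemma exists_limits {N : c00 → ℝ} (hN : IsSchlumprechtNorm N) (x : ℕ → c00)
    (hx : ∀ n, N (x n) = 1) : ∃ (ψ : ℕ → ℕ) (L : ℕ → ℝ), StrictMono ψ ∧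
    ∃ J : ℕ → ℕ, ∀ M j d, J M ≤ j → d ≤ M →
      3 / 4 * L d ≤ Mass N d (x (ψ j)) ∧ Mass N d (x (ψ j)) ≤ 5 / 4 * L d := by
  have hc : IsCompact (Set.pi Set.univ fun d : ℕ => Set.Icc (0 : ℝ) (flog (d : ℝ))) :=
    isCompact_univ_pi fun d => isCompact_Icc
  obtain ⟨L, _, ψ, hψ, hlim⟩ := hc.tendsto_subseq (x := fun j d => Mass N d (x j)) (by
    intro j d _
    refine ⟨mass_nonneg hN _ _, ?_⟩
    have := mass_le hN d (x j)
    rwa [hx, mul_one] at this)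
  rw [tendsto_pi_nhds] at hlim
  have hev : ∀ d : ℕ, ∀ᶠ j in Filter.atTop,
      3 / 4 * L d ≤ Mass N d (x (ψ j)) ∧ Mass N d (x (ψ j)) ≤ 5 / 4 * L d := by
    intro d
    have hd := hlim d
    simp only [Function.comp_apply] at hd
    rcases Nat.eq_zero_or_pos d with rfl | hpos
    · simp only [mass_zero hN] at hd ⊢
      have : L 0 = 0 := tendsto_nhds_unique hd tendsto_const_nhds |>.symm ▸ rfl
      simp [this]
    · have hL : 1 ≤ L d := ge_of_tendsto' hd fun j => by
        have := N_le_mass hN hpos (x (ψ j))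
        rwa [hx] at this
      have h1 := hd.eventually (lt_mem_nhds (show 3 / 4 * L d < L d by linarith))
      have h2 := hd.eventually (gt_mem_nhds (show L d < 5 / 4 * L d by linarith))
      filter_upwards [h1, h2] with j a b
      exact ⟨a.le, b.le⟩
  refine ⟨ψ, L, hψ, ?_⟩
  have : ∀ M : ℕ, ∃ J : ℕ, ∀ j d, J ≤ j → d ≤ M →
      3 / 4 * L d ≤ Mass N d (x (ψ j)) ∧ Mass N d (x (ψ j)) ≤ 5 / 4 * L d := by
    intro M
    have h1 : ∀ᶠ j in Filter.atTop, ∀ d ∈ Finset.range (M + 1),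
        3 / 4 * L d ≤ Mass N d (x (ψ j)) ∧ Mass N d (x (ψ j)) ≤ 5 / 4 * L d :=
      (Filter.eventually_all_finset _).2 fun d _ => hev d
    obtain ⟨J, hJ⟩ := Filter.eventually_atTop.1 h1
    exact ⟨J, fun j d hj hd => hJ j hj d (Finset.mem_range.2 (by omega))⟩
  choose J hJ using this
  exact ⟨J, hJ⟩

lemma sblock_of_block {x : ℕ → c00} (hx : IsBlockSeq x) : SBlock x := by
  intro l l' h
  induction l', h using Nat.le_induction with
  | base => exact hx.2 l
  | succ n hn ih =>
    intro i hi j hj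
    obtain ⟨q, hq⟩ := Finsupp.support_nonempty_iff.2 (hx.1 n)
    exact (ih i hi q hq).trans (hx.2 n q hq j hj)

lemma exists_stab {N : c00 → ℝ} (hN : IsSchlumprechtNorm N) (x : ℕ → c00) (hx : IsBlockSeq x)
    (hxn : ∀ n, N (x n) = 1) (k : ℕ → ℕ) : ∃ φ : ℕ → ℕ, StrictMono φ ∧
    ∃ M L δ, Stab N k (fun i => x (φ i)) M L δ := by
  classical
  obtain ⟨ψ, L, hψ, J, hJ⟩ := exists_limits hN x hxn
  have hch : ∃ (h : ℕ → ℕ) (δ : ℝ), 0 < δ ∧ ∀ M : ℕ → ℕ, (∀ i, h i ≤ M i) →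
      ((∀ i, ∃ m, m ≤ M i ∧ k i + 1 ≤ m ∧ δ * flog (m : ℝ) ≤ L m) ∨
      (∀ i : ℕ, ∀ m, M i ≤ m → L m ≤ flog (m : ℝ) / (2 * (i + 1)))) := by
    by_cases hP : ∃ δ : ℝ, 0 < δ ∧ ∀ m₀ : ℕ, ∃ m, m₀ ≤ m ∧ δ * flog (m : ℝ) ≤ L m
    · obtain ⟨δ, hδ, hP⟩ := hP
      choose g hg1 hg2 using hP
      exact ⟨fun i => g (k i + 1), δ, hδ, fun M hM => Or.inl fun i =>
        ⟨g (k i + 1), hM i, hg1 _, hg2 _⟩⟩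
    · push Not at hP
      have : ∀ i : ℕ, ∃ m₀ : ℕ, ∀ m, m₀ ≤ m → L m < 1 / (2 * ((i : ℝ) + 1)) * flog (m : ℝ) :=
        fun i => hP _ (by positivity)
      choose g hg using this
      refine ⟨g, 1, one_pos, fun M hM => Or.inr fun i m hm => ?_⟩
      have := hg i m ((hM i).trans hm)
      rw [one_div_mul_eq_div] at this
      exact this.le
  obtain ⟨h, δ, hδ, hch⟩ := hch
  set σ : ℕ → ℕ := fun j => ∑ j' ∈ Finset.range j, (x (ψ j')).support.card with hσ
  obtain ⟨φ, M, hφ, hM, hhM, hJM, hσM⟩ := build_seq J h σ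
  refine ⟨fun i => ψ (φ i), hψ.comp hφ, M, L, δ, ?_⟩
  refine ⟨(sblock_of_block hx).comp (hψ.comp hφ), fun l => hxn _, hM, ?_, ?_, hδ, hch M hhM⟩
  · intro i j d hij hd
    exact hJ (M i) (φ j) d ((hJM i).trans (hφ.monotone hij)) hd
  · rintro (_ | i)
    · simpa using flog_nat_nonneg _
    · have h1 : ∑ j ∈ Finset.range (i + 1), (x (ψ (φ j))).support.card ≤ σ (φ i + 1) := by
        rw [hσ, ← Finset.sum_image (s := Finset.range (i + 1)) (g := φ)
          (f := fun j => (x (ψ j)).support.card) (fun _ _ _ _ e => hφ.injective e)]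
        refine Finset.sum_le_sum_of_subset ?_
        intro j hj
        obtain ⟨l, hl, rfl⟩ := Finset.mem_image.1 hj
        rw [Finset.mem_range] at hl ⊢
        have := hφ.monotone (show l ≤ i by omega)
        omega
      have h2 : ((σ (φ i + 1) : ℕ) : ℝ) ≤ flog ((2 ^ σ (φ i + 1) : ℕ) : ℝ) := by
        unfold flog
        rw [Real.le_logb_iff_rpow_le (by norm_num) (by positivity), Real.rpow_natCast]
        push_cast; linarith
      have h3 := flog_nat_mono (hσM i)
      have h4 : ((∑ j ∈ Finset.range (i + 1), (x (ψ (φ j))).support.card : ℕ) : ℝ) ≤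
        ((σ (φ i + 1) : ℕ) : ℝ) := by exact_mod_cast h1
      linarith

lemma one_sided {N : c00 → ℝ} (hN : IsSchlumprechtNorm N) {k : ℕ → ℕ} {y : ℕ → c00}
    {M : ℕ → ℕ} {L : ℕ → ℝ} {δ : ℝ} (h : Stab N k y M L δ) {s t : ℕ → ℕ} (hs : StrictMono s)
    (ht : StrictMono t) (htk : ∀ i, t i ≤ k i) : ∃ C : ℝ, 1 ≤ C ∧ ∀ (a : ℕ → ℝ) (A : Finset ℕ),
      N (cmb (fun i => y (t i)) a A) ≤ C * N (cmb (fun i => y (s i)) a A) := by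
  have hδ := h.dpos
  have hδ' : 0 ≤ 6 / δ := by positivity
  exact compare hN (h.sb.comp hs) (h.sb.comp ht) (fun _ => h.n1 _) (fun _ => h.n1 _)
    (by linarith) (compHyp_of_stab hN h hs ht htk)

end Sch

/-- Theorem 3.2: Every normalized block sequence `(x_i)` has,
for any strictly increasing `(k_i)`, a subsequence `(y_i) = (x_{φ i})` such that
whenever `(s_i)`, `(t_i)` are strictly increasing with `s_i, t_i ≤ k_i`, the
sequences `(y_{s_i})` and `(y_{t_i})` are equivalent. -/
theorem subsequence_stabilization
    (N : c00 → ℝ) (hN : IsSchlumprechtNorm N)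
    (x : ℕ → c00) (hx : IsBlockSeq x) (hxn : ∀ n, N (x n) = 1)
    (k : ℕ → ℕ) (hk : StrictMono k) :
    ∃ φ : ℕ → ℕ, StrictMono φ ∧
      ∀ s t : ℕ → ℕ, StrictMono s → StrictMono t →
        (∀ i, s i ≤ k i) → (∀ i, t i ≤ k i) →
        SeqEquiv N (fun i => x (φ (s i))) (fun i => x (φ (t i))) := by
  obtain ⟨φ, hφ, M, L, δ, hst⟩ := Sch.exists_stab hN x hx hxn k
  refine ⟨φ, hφ, fun s t hs ht hsk htk => ?_⟩
  obtain ⟨C1, hC1, h1⟩ := Sch.one_sided hN hst hs ht htk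
  obtain ⟨C2, hC2, h2⟩ := Sch.one_sided hN hst ht hs hsk
  refine ⟨max C1 C2, le_max_of_le_left hC1, fun a => ⟨?_, ?_⟩⟩
  · rw [one_div, inv_mul_le_iff₀ (lt_of_lt_of_le one_pos (le_max_of_le_left hC1))]
    exact (h2 a a.support).trans
      (mul_le_mul_of_nonneg_right (le_max_right _ _) (Sch.N_nonneg hN _))
  · exact (h1 a a.support).trans
      (mul_le_mul_of_nonneg_right (le_max_left _ _) (Sch.N_nonneg hN _))
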